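/- Degree-3 modular differential equation for the reflective Jacobi form ψ_{0,2}: with all heat operators taken with index m = 2, the weak Jacobi form ψ_{0,2} = φ_{0,1}² − 20·φ_{0,2} satisfies H^{(2)}_{4}(H^{(2)}_{2}(H^{(2)}_{0}(ψ_{0,2})))(τ,z) − (263/4)·E₄(τ)·H^{(2)}_{0}(ψ_{0,2})(τ,z) + (121/4)·E₆(τ)·ψ_{0,2}(τ,z) = 0 for all (τ,z) ∈ ℍ × ℂ. -/

import Mathlib

/-!
Write `X = φ_{−2,1}` and `Y = φ_{0,1}`. The key point is that the index 2 heat operator maps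
`aY² + bXY + cX²`, with `a, b, c` holomorphic functions of `τ`, to an expression of the same shape,
with coefficients given explicitly in terms of `a, b, c`, their derivatives, and `E₂, E₄, E₆`
(`heatMod_comb`). Since `ψ_{0,2} = (1/6)Y² + (5/6)E₄X²`, three applications of this rule, together
with Ramanujan's formulas for the derivatives of `E₂, E₄, E₆`, reduce the theorem to a polynomial
identity.

The rule rests on the Weierstrass function of the lattice `ℤ + ℤτ`. The functions `ϑ²`,
`ϑϑ'' − ϑ'²` and `ϑ²℘` are theta functions of degree two, which form a space of dimension at most two
(`theta_dependent`, by a recursion for Fourier coefficients); comparing them at the origin, where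
`ϑ'(0) ≠ 0`, gives `℘ = κ(τ) − (log ϑ)''` (`exists_wp_eq`). The Weierstrass equation for `℘` thus
becomes an equation for the logarithmic derivatives of `ϑ` (`lA2_sq`, `lA3_eq`, `lA4_eq`).
Differentiating it in `τ`, with `∂ϑ/∂τ = (4πi)⁻¹∂²ϑ/∂z²`, yields a polynomial in `℘` that vanishes
identically, hence coefficientwise: this is a differential system for `κ, g₂, g₃` (`deriv_system`).
As `g₂³ − 27g₃²` is a multiple of `η²⁴` and `η'/η` is a multiple of `E₂`, it follows that
`κ = −(π²/3)E₂` (`kap_eq`), and the system is Ramanujan's (`ramanujan`). In particular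
`Y = −(3/π²)℘X`, and `heatMod_comb` follows from the Weierstrass equation wherever `ϑ` and `℘'` do
not vanish, and then everywhere by continuity.
-/

open Complex Real

noncomputable section

/-- The Jacobi theta series `ϑ(τ,z) = q^{1/8} ζ^{1/2} ∑_{n∈ℤ} (−1)^n q^{n(n+1)/2} ζ^n`
with `q = e^{2πiτ}`, `ζ = e^{2πiz}`. -/
def thetaJ (τ z : ℂ) : ℂ :=
  Complex.exp (π * I * τ / 4) * Complex.exp (π * I * z) *
    ∑' n : ℤ, (-1 : ℂ) ^ n * Complex.exp (π * I * τ * n * (n + 1)) *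
      Complex.exp (2 * π * I * z * n)

/-- The Dedekind eta function `η(τ) = q^{1/24} ∏_{n≥1} (1 − q^n)`. -/
def etaD (τ : ℂ) : ℂ :=
  Complex.exp (π * I * τ / 12) * ∏' n : ℕ, (1 - Complex.exp (2 * π * I * τ * (n + 1)))

/-- The divisor power sum `σ_k(n) = ∑_{d ∣ n} d^k`. -/
def sigmaD (k n : ℕ) : ℕ := ∑ d ∈ n.divisors, d ^ k

/-- The quasi-modular Eisenstein series `E₂`. -/
def Eis2 (τ : ℂ) : ℂ :=
  1 - 24 * ∑' n : ℕ, (sigmaD 1 (n + 1) : ℂ) * Complex.exp (2 * π * I * τ * (n + 1))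

/-- The Eisenstein series `E₄`. -/
def Eis4 (τ : ℂ) : ℂ :=
  1 + 240 * ∑' n : ℕ, (sigmaD 3 (n + 1) : ℂ) * Complex.exp (2 * π * I * τ * (n + 1))

/-- The Eisenstein series `E₆`. -/
def Eis6 (τ : ℂ) : ℂ :=
  1 - 504 * ∑' n : ℕ, (sigmaD 5 (n + 1) : ℂ) * Complex.exp (2 * π * I * τ * (n + 1))

/-- The heat operator `H^{(m)}φ = (12/(2πi)) ∂φ/∂τ + (3/(4π²m)) ∂²φ/∂z²` of index `m`. -/
def heatOp (m : ℚ) (φ : ℂ → ℂ → ℂ) (τ z : ℂ) : ℂ :=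
  12 / (2 * π * I) * deriv (fun t => φ t z) τ
    + 3 / (4 * π ^ 2 * (m : ℂ)) * deriv (deriv (φ τ)) z

/-- The modular heat operator `H^{(m)}_k φ = H^{(m)}φ − ((2k−1)/2)·E₂·φ`. -/
def heatMod (m k : ℚ) (φ : ℂ → ℂ → ℂ) (τ z : ℂ) : ℂ :=
  heatOp m φ τ z - (2 * (k : ℂ) - 1) / 2 * Eis2 τ * φ τ z

/-- The weak Jacobi form `φ_{−2,1} = ϑ²/η⁶` of weight −2 and index 1. -/
def phim21 (τ z : ℂ) : ℂ := thetaJ τ z ^ 2 / etaD τ ^ 6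

/-- The weak Jacobi form `φ_{0,1}` of weight 0 and index 1:
`φ_{0,1} = (3/π²)·(ϑ·∂²ϑ/∂z² − (∂ϑ/∂z)²)/η⁶ + E₂·ϑ²/η⁶`. -/
def phi01 (τ z : ℂ) : ℂ :=
  3 / (π : ℂ) ^ 2 *
      (thetaJ τ z * deriv (deriv (thetaJ τ)) z - (deriv (thetaJ τ) z) ^ 2) / etaD τ ^ 6
    + Eis2 τ * thetaJ τ z ^ 2 / etaD τ ^ 6

/-- The weak Jacobi form `φ_{0,2} = (φ_{0,1}² − E₄·φ_{−2,1}²)/24` of weight 0 and index 2. -/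
def phi02 (τ z : ℂ) : ℂ := (phi01 τ z ^ 2 - Eis4 τ * phim21 τ z ^ 2) / 24

/-- The weak Jacobi form `ψ_{0,2} = φ_{0,1}² − 20·φ_{0,2}` of weight 0 and index 2. -/
def psi02 (τ z : ℂ) : ℂ := phi01 τ z ^ 2 - 20 * phi02 τ z

/-! ### The theta series: derivatives, heat equation, quasi-periodicity -/

/-- The `n`-th term of the `k`-th `z`-derivative of the theta series, in the form
`(-1)^n (πi(2n+1))^k exp(πiτ(2n+1)²/4 + πi(2n+1)z)`. -/
def thTerm (k : ℕ) (n : ℤ) (τ z : ℂ) : ℂ :=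
  (-1 : ℂ) ^ n * (π * I * (2 * n + 1)) ^ k *
    Complex.exp (π * I * τ * (2 * n + 1) ^ 2 / 4 + π * I * (2 * n + 1) * z)

/-- The `k`-th `z`-derivative of the theta series, as a series. -/
def th (k : ℕ) (τ z : ℂ) : ℂ := ∑' n : ℤ, thTerm k n τ z

/-- The summable majorant of `thTerm k n` on `T ≤ Im τ`, `|Im z| ≤ S`. -/
def thBound (S T : ℝ) (k : ℕ) (n : ℤ) : ℝ :=
  π ^ k * ((|2 * n + 1| : ℤ) ^ k *
    Real.exp (-π * (T / 4 * ((2 * n + 1 : ℤ) : ℝ) ^ 2 - 2 * (S / 2) * (|2 * n + 1| : ℤ))))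

lemma summable_thBound (S : ℝ) {T : ℝ} (hT : 0 < T) (k : ℕ) : Summable (thBound S T k) := by
  have h := summable_pow_mul_jacobiTheta₂_term_bound (S / 2) (T := T / 4) (by positivity) k
  have h2 := h.comp_injective (i := fun n : ℤ => 2 * n + 1) (fun a b hab => by simpa using hab)
  exact h2.mul_left (π ^ k)

lemma norm_thTerm_le {S T : ℝ} (k : ℕ) (n : ℤ) {τ z : ℂ} (hτ : T ≤ τ.im) (hz : |z.im| ≤ S) :
    ‖thTerm k n τ z‖ ≤ thBound S T k n := by
  have h1 : ‖(-1 : ℂ) ^ n‖ = 1 := by simp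
  have h2 : ‖(π * I * (2 * n + 1) : ℂ) ^ k‖ = π ^ k * ((|2 * n + 1| : ℤ) : ℝ) ^ k := by
    have : (2 * n + 1 : ℂ) = ((2 * n + 1 : ℤ) : ℂ) := by push_cast; ring
    rw [this, norm_pow, norm_mul, norm_mul, norm_I, Complex.norm_intCast, Complex.norm_real,
      Real.norm_of_nonneg pi_pos.le, mul_one, mul_pow, Int.cast_abs]
  have h3 : (π * I * τ * (2 * n + 1) ^ 2 / 4 + π * I * (2 * n + 1) * z : ℂ).re
      = -π * (τ.im / 4 * ((2 * n + 1 : ℤ) : ℝ) ^ 2 + ((2 * n + 1 : ℤ) : ℝ) * z.im) := by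
    have : (π * I * τ * (2 * n + 1) ^ 2 / 4 + π * I * (2 * n + 1) * z : ℂ)
      = I * ((π * (2 * n + 1) ^ 2 / 4 : ℝ) * τ + (π * (2 * n + 1) : ℝ) * z) := by
        push_cast; ring
    rw [this, Complex.I_mul_re, Complex.add_im, Complex.im_ofReal_mul, Complex.im_ofReal_mul]
    push_cast; ring
  rw [thTerm, norm_mul, norm_mul, h1, h2, one_mul, Complex.norm_exp, h3, thBound, mul_assoc]
  gcongr ?_ * (?_ * Real.exp ?_)
  have e1 : -(((2 * n + 1 : ℤ) : ℝ) * z.im) ≤ ((|2 * n + 1| : ℤ) : ℝ) * S := by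
    rw [Int.cast_abs]
    calc _ ≤ |((2 * n + 1 : ℤ) : ℝ) * z.im| := neg_le_abs _
      _ = |((2 * n + 1 : ℤ) : ℝ)| * |z.im| := abs_mul _ _
      _ ≤ _ := by gcongr
  have e2 : T / 4 * ((2 * n + 1 : ℤ) : ℝ) ^ 2 ≤ τ.im / 4 * ((2 * n + 1 : ℤ) : ℝ) ^ 2 := by
    gcongr
  nlinarith [pi_pos]

lemma summable_thTerm (k : ℕ) {τ : ℂ} (hτ : 0 < τ.im) (z : ℂ) :
    Summable fun n => thTerm k n τ z :=
  (summable_thBound |z.im| hτ k).of_norm_bounded fun n => norm_thTerm_le k n le_rfl le_rfl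

lemma hasDerivAt_th_z (k : ℕ) {τ : ℂ} (hτ : 0 < τ.im) (z : ℂ) :
    HasDerivAt (th k τ) (th (k + 1) τ z) z := by
  have hz : z ∈ {w : ℂ | |w.im| < |z.im| + 1} := by simp
  refine hasDerivAt_tsum_of_isPreconnected (summable_thBound (|z.im| + 1) hτ (k + 1))
    (t := {w : ℂ | |w.im| < |z.im| + 1}) (g := fun n w => thTerm k n τ w)
    (g' := fun n w => thTerm (k + 1) n τ w) ?_ ?_ ?_ ?_ hz (summable_thTerm k hτ z) hz
  · exact isOpen_lt (by fun_prop) (by fun_prop)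
  · have : {w : ℂ | |w.im| < |z.im| + 1}
        = {w : ℂ | -(|z.im| + 1) < w.im} ∩ {w : ℂ | w.im < |z.im| + 1} := by
      ext w; simp [abs_lt]
    rw [this]
    exact ((convex_halfSpace_im_gt _).inter (convex_halfSpace_im_lt _)).isPreconnected
  · intro n w _
    have h : HasDerivAt (fun w : ℂ => π * I * τ * (2 * n + 1) ^ 2 / 4 + π * I * (2 * n + 1) * w)
        (π * I * (2 * n + 1)) w := by
      simpa using ((hasDerivAt_id w).const_mul (π * I * (2 * n + 1) : ℂ)).const_add
        (π * I * τ * (2 * n + 1) ^ 2 / 4 : ℂ)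
    convert! h.cexp.const_mul ((-1 : ℂ) ^ n * (π * I * (2 * n + 1)) ^ k) using 1
    rw [thTerm]; ring
  · exact fun n w hw => norm_thTerm_le _ _ le_rfl (le_of_lt hw)

/-- The heat equation: `∂ϑ/∂τ = (4πi)⁻¹ ∂²ϑ/∂z²`, also for the `z`-derivatives of `ϑ`. -/
lemma hasDerivAt_th_tau (k : ℕ) {τ : ℂ} (hτ : 0 < τ.im) (z : ℂ) :
    HasDerivAt (fun t => th k t z) (1 / (4 * π * I) * th (k + 2) τ z) τ := by
  have hτ' : τ ∈ {w : ℂ | τ.im / 2 < w.im} := by simp [hτ]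
  rw [th, ← tsum_mul_left]
  refine hasDerivAt_tsum_of_isPreconnected
    ((summable_thBound |z.im| (half_pos hτ) (k + 2)).mul_left ‖(1 / (4 * π * I) : ℂ)‖)
    (t := {w : ℂ | τ.im / 2 < w.im}) (g := fun n w => thTerm k n w z)
    (g' := fun n w => 1 / (4 * π * I) * thTerm (k + 2) n w z) ?_ ?_ ?_ ?_ hτ'
    (summable_thTerm k hτ z) hτ'
  · exact isOpen_lt (by fun_prop) (by fun_prop)
  · exact (convex_halfSpace_im_gt _).isPreconnected
  · intro n w _
    have h : HasDerivAt (fun w : ℂ => π * I * w * (2 * n + 1) ^ 2 / 4 + π * I * (2 * n + 1) * z)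
        (π * I * (2 * n + 1) ^ 2 / 4) w := by
      simpa using ((((hasDerivAt_id w).const_mul (π * I : ℂ)).mul_const
        ((2 * n + 1) ^ 2 : ℂ)).div_const 4).add_const (π * I * (2 * n + 1) * z)
    convert! h.cexp.const_mul ((-1 : ℂ) ^ n * (π * I * (2 * n + 1)) ^ k) using 1
    have : (π : ℂ) ≠ 0 := by simp [pi_ne_zero]
    rw [thTerm]; field_simp; ring
  · intro n w hw
    rw [norm_mul]
    gcongr
    exact norm_thTerm_le _ _ (le_of_lt hw) le_rfl

lemma thetaJ_eq_th (τ z : ℂ) : thetaJ τ z = th 0 τ z := by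
  rw [thetaJ, th, ← tsum_mul_left]
  refine tsum_congr fun n => ?_
  rw [thTerm, pow_zero, mul_one]
  rw [show Complex.exp (π * I * τ / 4) * Complex.exp (π * I * z) *
      ((-1 : ℂ) ^ n * Complex.exp (π * I * τ * n * (n + 1)) * Complex.exp (2 * π * I * z * n))
    = (-1 : ℂ) ^ n * (Complex.exp (π * I * τ / 4) * Complex.exp (π * I * z) *
      Complex.exp (π * I * τ * n * (n + 1)) * Complex.exp (2 * π * I * z * n)) by ring,
    ← Complex.exp_add, ← Complex.exp_add, ← Complex.exp_add]
  congr 2; ring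

lemma th_add_one (τ z : ℂ) : th 0 τ (z + 1) = -th 0 τ z := by
  rw [th, th, ← tsum_neg]
  refine tsum_congr fun n => ?_
  rw [thTerm, thTerm, show (π * I * τ * (2 * n + 1) ^ 2 / 4 + π * I * (2 * n + 1) * (z + 1) : ℂ)
    = (π * I * τ * (2 * n + 1) ^ 2 / 4 + π * I * (2 * n + 1) * z) + (n * (2 * π * I) + π * I) by
      ring, Complex.exp_add _ (n * (2 * π * I) + π * I), Complex.exp_add (n * (2 * π * I)), exp_pi_mul_I,
    exp_int_mul_two_pi_mul_I]
  ring

lemma th_add_tau (τ z : ℂ) :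
    th 0 τ (z + τ) = -Complex.exp (-π * I * τ - 2 * π * I * z) * th 0 τ z := by
  rw [th, th, ← tsum_mul_left, ← (Equiv.addRight (1 : ℤ)).tsum_eq (fun n => _ * thTerm 0 n τ z)]
  refine tsum_congr fun n => ?_
  simp only [thTerm, pow_zero, mul_one, Equiv.coe_addRight]
  rw [zpow_add₀ (by norm_num), show -Complex.exp (-π * I * τ - 2 * π * I * z) *
    ((-1 : ℂ) ^ n * (-1) ^ (1 : ℤ) * Complex.exp (π * I * τ * (2 * ((n + 1 : ℤ) : ℂ) + 1) ^ 2 / 4 +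
      π * I * (2 * ((n + 1 : ℤ) : ℂ) + 1) * z)) = (-1) ^ n *
    (Complex.exp (-π * I * τ - 2 * π * I * z) *
    (Complex.exp (π * I * τ * (2 * ((n + 1 : ℤ) : ℂ) + 1) ^ 2 / 4 +
      π * I * (2 * ((n + 1 : ℤ) : ℂ) + 1) * z))) by rw [zpow_one]; ring, ← Complex.exp_add]
  congr 2; push_cast; ring

lemma th_neg (τ z : ℂ) : th 0 τ (-z) = -th 0 τ z := by
  rw [th, th, ← tsum_neg, ← (Equiv.subLeft (-1 : ℤ)).tsum_eq (fun n => -thTerm 0 n τ z)]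
  refine tsum_congr fun n => ?_
  simp only [thTerm, pow_zero, mul_one, Equiv.subLeft_apply]
  rw [zpow_sub₀ (by norm_num)]
  have : ((-1 : ℂ) ^ (-1 : ℤ) / (-1) ^ n) = -(-1) ^ n := by
    rcases Int.even_or_odd n with h | h <;> simp [h.neg_one_zpow]
  rw [this, neg_mul, neg_neg]
  congr 2; push_cast; ring

lemma th_zero (τ : ℂ) : th 0 τ 0 = 0 := by
  have := th_neg τ 0
  rw [neg_zero] at this
  exact self_eq_neg.mp this

/-- The theta series is not identically zero in `z`: the zeroth Fourier coefficient of
`e^{-πiz} ϑ(τ,z)` is `e^{πiτ/4}`. -/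
lemma exists_th_ne_zero {τ : ℂ} (hτ : 0 < τ.im) : ∃ z, th 0 τ z ≠ 0 := by
  by_contra! h
  let f : ℤ → C(ℝ, ℂ) := fun n =>
    ⟨fun x => Complex.exp (-(π * I * x)) * thTerm 0 n τ x, by unfold thTerm; fun_prop⟩
  have hs : Summable fun n => ‖(f n).restrict
      (⟨Set.uIcc (0 : ℝ) 1, isCompact_uIcc⟩ : TopologicalSpace.Compacts ℝ)‖ := by
    refine (summable_thBound 0 hτ 0).of_nonneg_of_le (fun _ => norm_nonneg _) fun n => ?_
    have h0 : 0 ≤ thBound 0 τ.im 0 n :=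
      (norm_nonneg _).trans (norm_thTerm_le (S := 0) (z := 0) 0 n le_rfl (by simp))
    rw [ContinuousMap.norm_le _ h0]
    rintro ⟨x, hx⟩
    have e : ‖Complex.exp (-(π * I * x))‖ = 1 := by
      rw [show (-(π * I * x) : ℂ) = ((-(π * x) : ℝ) : ℂ) * I by push_cast; ring]
      exact Complex.norm_exp_ofReal_mul_I _
    simp only [f, ContinuousMap.restrict_apply, ContinuousMap.coe_mk, norm_mul, e, one_mul]
    exact norm_thTerm_le 0 n le_rfl (by simp)
  have hsum := intervalIntegral.hasSum_intervalIntegral_of_summable_norm hs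
  have hz : ∀ x : ℝ, ∑' n, f n x = 0 := fun x => by
    simp only [f, ContinuousMap.coe_mk, tsum_mul_left]
    rw [show ∑' n, thTerm 0 n τ x = 0 from h x, mul_zero]
  simp only [hz, intervalIntegral.integral_zero] at hsum
  have hv : ∀ n, ∫ x in (0 : ℝ)..1, f n x = if n = 0 then Complex.exp (π * I * τ / 4) else 0 := by
    intro n
    have e : ∀ x : ℝ, f n x = (-1) ^ n * Complex.exp (π * I * τ * (2 * n + 1) ^ 2 / 4) *
        Complex.exp ((2 * π * I * n) * x) := fun x => by
      simp only [f, ContinuousMap.coe_mk, thTerm, pow_zero, mul_one]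
      rw [mul_left_comm, mul_assoc ((-1 : ℂ) ^ n), ← Complex.exp_add, ← Complex.exp_add]
      congr 2; ring
    simp only [e]
    rw [intervalIntegral.integral_const_mul]
    split_ifs with hn
    · simp [hn]
    · have h0 : (2 * π * I * n : ℂ) ≠ 0 := by simp [pi_ne_zero, hn]
      rw [integral_exp_mul_complex h0]
      rw [show (2 * π * I * n * (1 : ℝ) : ℂ) = n * (2 * π * I) by push_cast; ring,
        exp_int_mul_two_pi_mul_I]
      simp
  simp only [hv] at hsum
  exact Complex.exp_ne_zero _ ((hasSum_ite_eq 0 _).unique hsum)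

/-! ### The space of theta functions of given degree -/

/-- By Cauchy's theorem, the integral of an entire 1-periodic function over a horizontal period does
not depend on the height. -/
lemma integral_shift_of_periodic {g : ℂ → ℂ} (hg : Differentiable ℂ g) (hp : ∀ z, g (z + 1) = g z)
    (w : ℂ) : ∫ x in (0 : ℝ)..1, g (x + w) = ∫ x in (0 : ℝ)..1, g x := by
  obtain ⟨G, hG⟩ := hg.isExactOn_univ
  have hG' : ∀ z, HasDerivAt G (g z) z := fun z => hG z trivial
  have key : ∀ w : ℂ, ∫ x in (0 : ℝ)..1, g (x + w) = G (1 + w) - G w := fun w => by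
    have := intervalIntegral.integral_eq_sub_of_hasDerivAt (a := 0) (b := 1)
      (f := fun x : ℝ => G (x + w)) (f' := fun x : ℝ => g (x + w))
      (fun x _ => ((hG' (x + w)).comp_add_const (x : ℂ) w).comp_ofReal)
      (by
        have := hg.continuous
        exact Continuous.intervalIntegrable (by fun_prop) _ _)
    simpa using this
  have hconst : ∀ a b : ℂ, G (1 + a) - G a = G (1 + b) - G b := by
    have hd : ∀ z, HasDerivAt (fun w => G (1 + w) - G w) 0 z := fun z => by
      have := ((hG' (1 + z)).comp_const_add 1 z).sub (hG' z)
      rwa [add_comm 1 z, hp, sub_self] at this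
    intro a b
    exact is_const_of_deriv_eq_zero (fun z => (hd z).differentiableAt) (fun z => (hd z).deriv) a b
  have h0 := key 0
  simp only [add_zero] at h0
  rw [key, h0]
  simpa using hconst w 0

/-- The `n`-th Fourier coefficient along the real axis. -/
def fc (f : ℂ → ℂ) (n : ℤ) : ℂ := ∫ x in (0 : ℝ)..1, Complex.exp (-(2 * π * I * n * x)) * f x

/-- Shifting the contour by `τ` turns quasi-periodicity into a recursion for Fourier coefficients. -/
lemma fc_shift {f : ℂ → ℂ} (hf : Differentiable ℂ f) (h1 : ∀ z, f (z + 1) = f z) {τ C : ℂ} {N : ℕ}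
    (h2 : ∀ z, f (z + τ) = C * Complex.exp (-(2 * π * I * N * z)) * f z) (n : ℤ) :
    fc f n = Complex.exp (-(2 * π * I * n * τ)) * C * fc f (n + N) := by
  have hp : ∀ z : ℂ, Complex.exp (-(2 * π * I * n * (z + 1))) * f (z + 1)
      = Complex.exp (-(2 * π * I * n * z)) * f z := fun z => by
    rw [h1, show (-(2 * π * I * n * (z + 1)) : ℂ) = -(2 * π * I * n * z) + (-n : ℤ) * (2 * π * I) by
      push_cast; ring, Complex.exp_add, exp_int_mul_two_pi_mul_I, mul_one]
  have := integral_shift_of_periodic (g := fun z => Complex.exp (-(2 * π * I * n * z)) * f z)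
    (by fun_prop) hp τ
  rw [fc, ← this, fc, ← intervalIntegral.integral_const_mul]
  congr 1; ext x
  rw [h2, show (-(2 * π * I * n * (x + τ)) : ℂ) = -(2 * π * I * n * τ) + -(2 * π * I * n * x) by
    ring, show (-(2 * π * I * (n + N : ℤ) * x) : ℂ) = -(2 * π * I * n * x) + -(2 * π * I * N * x) by
    push_cast; ring, Complex.exp_add, Complex.exp_add]
  ring

/-- The Fourier coefficients determine `f` on the real axis, hence everywhere by analyticity. -/
lemma eq_zero_of_fc {f : ℂ → ℂ} (hf : Differentiable ℂ f) (h1 : ∀ z, f (z + 1) = f z)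
    (hc : ∀ n, fc f n = 0) (z : ℂ) : f z = 0 := by
  have hreal : ∀ x : ℝ, f x = 0 := by
    have hper : Function.Periodic (fun x : ℝ => f x) 1 := fun x => by simpa using h1 x
    have hcont : Continuous (fun x : ℝ => f x) := by
      have := hf.continuous
      fun_prop
    let F : C(AddCircle (1 : ℝ), ℂ) :=
      ⟨hper.lift, continuous_coinduced_dom.mpr (by simpa [Function.comp_def] using! hcont)⟩
    have hF : ∀ n, fourierCoeff F n = 0 := fun n => by
      have hcoef : ∫ x in (0 : ℝ)..0 + 1, fourier (-n) (x : AddCircle (1 : ℝ)) • F x = fc f n := by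
        rw [zero_add, fc]
        refine intervalIntegral.integral_congr fun x _ => ?_
        have : F (x : AddCircle (1 : ℝ)) = f x := hper.lift_coe x
        simp only [this, fourier_coe_apply, smul_eq_mul]
        congr 2; push_cast; ring
      rw [fourierCoeff_eq_intervalIntegral _ n 0, hcoef, hc, smul_zero]
    intro x
    have hs := has_pointwise_sum_fourier_series_of_summable (f := F)
      (by rw [show fourierCoeff F = fun _ => 0 from funext hF]; exact summable_zero) (x : AddCircle (1 : ℝ))
    simp only [hF, zero_smul] at hs
    have : F (x : AddCircle (1 : ℝ)) = f x := hper.lift_coe x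
    rw [← this]
    exact hs.unique hasSum_zero
  have hfa : AnalyticOnNhd ℂ f Set.univ := fun z _ => hf.analyticAt z
  have h0 : AnalyticOnNhd ℂ (fun _ : ℂ => (0 : ℂ)) Set.univ := fun z _ => analyticAt_const
  have hfreq : ∃ᶠ w in nhdsWithin (0 : ℂ) {0}ᶜ, f w = (fun _ => (0 : ℂ)) w := by
    have ht : Filter.Tendsto (fun x : ℝ => (x : ℂ)) (nhdsWithin 0 {0}ᶜ) (nhdsWithin 0 {0}ᶜ) := by
      refine tendsto_nhdsWithin_iff.mpr ⟨?_, ?_⟩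
      · exact (Complex.continuous_ofReal.tendsto' 0 0 (by simp)).mono_left nhdsWithin_le_nhds
      · filter_upwards [self_mem_nhdsWithin] with x hx
        simpa using hx
    exact ht.frequently (Filter.Frequently.of_forall hreal)
  exact congrFun (hfa.eq_of_frequently_eq h0 hfreq) z

/-- Theta functions of degree `N` are determined by `N` consecutive Fourier coefficients: an entire
function with `f(z+1) = f(z)` and `f(z+τ) = C e^{-2πiNz} f(z)` satisfies a recursion
`c_n = C e^{-2πinτ} c_{n+N}`. -/
lemma eq_zero_of_fc_range {f : ℂ → ℂ} (hf : Differentiable ℂ f) (h1 : ∀ z, f (z + 1) = f z)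
    {τ C : ℂ} {N : ℕ} (hC : C ≠ 0) (hN : 0 < N)
    (h2 : ∀ z, f (z + τ) = C * Complex.exp (-(2 * π * I * N * z)) * f z)
    (hc : ∀ j : Fin N, fc f (j : ℕ) = 0) (z : ℂ) : f z = 0 := by
  have step : ∀ n : ℤ, fc f n = 0 ↔ fc f (n + N) = 0 := fun n => by
    rw [fc_shift hf h1 h2 n]
    simp [hC, Complex.exp_ne_zero]
  have hm : ∀ (r m : ℤ), fc f r = 0 → fc f (r + m * N) = 0 := by
    intro r m hr
    induction m using Int.induction_on with
    | zero => simpa using hr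
    | succ k ih =>
      have := (step _).1 ih
      rwa [show r + (k : ℤ) * N + N = r + ((k : ℤ) + 1) * N by ring] at this
    | pred k ih =>
      refine (step _).2 ?_
      rwa [show r + (-(k : ℤ) - 1) * N + N = r + (-(k : ℤ)) * N by ring]
  refine eq_zero_of_fc hf h1 (fun n => ?_) z
  have hNZ : (0 : ℤ) < N := by exact_mod_cast hN
  have hr := hc ⟨(n % N).toNat, by
    have := Int.emod_lt_of_pos n hNZ
    have := Int.emod_nonneg n hNZ.ne'
    omega⟩
  simp only [Int.toNat_of_nonneg (Int.emod_nonneg n hNZ.ne')] at hr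
  have := hm _ (n / N) hr
  rwa [mul_comm, Int.emod_add_mul_ediv] at this

/-- Theta functions of degree `N` form a space of dimension at most `N`. -/
lemma theta_dependent {τ C : ℂ} {N : ℕ} (hC : C ≠ 0) (hN : 0 < N) (f : Fin (N + 1) → ℂ → ℂ)
    (hf : ∀ i, Differentiable ℂ (f i)) (h1 : ∀ i z, f i (z + 1) = f i z)
    (h2 : ∀ i z, f i (z + τ) = C * Complex.exp (-(2 * π * I * N * z)) * f i z) :
    ∃ a : Fin (N + 1) → ℂ, a ≠ 0 ∧ ∀ z, ∑ i, a i * f i z = 0 := by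
  let φ : (Fin (N + 1) → ℂ) →ₗ[ℂ] (Fin N → ℂ) :=
    Matrix.toLin' (Matrix.of fun (j : Fin N) i => fc (f i) (j : ℕ))
  have hker : LinearMap.ker φ ≠ ⊥ := LinearMap.ker_ne_bot_of_finrank_lt (by simp)
  obtain ⟨a, ha, ha0⟩ := (Submodule.ne_bot_iff _).1 hker
  refine ⟨a, ha0, fun z => ?_⟩
  refine eq_zero_of_fc_range (f := fun z => ∑ i, a i * f i z) (by fun_prop) ?_ hC hN (τ := τ) ?_ ?_ z
  · intro z; simp only [h1]
  · intro z; simp only [h2, Finset.mul_sum]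
    exact Finset.sum_congr rfl fun i _ => by ring
  · intro j
    have h := congrFun (LinearMap.mem_ker.1 ha) j
    simp only [φ, Matrix.toLin'_apply, Matrix.mulVec, dotProduct, Matrix.of_apply,
      Pi.zero_apply] at h
    rw [← h, fc]
    simp only [Finset.mul_sum]
    rw [intervalIntegral.integral_finsetSum]
    · refine Finset.sum_congr rfl fun i _ => ?_
      rw [fc, ← intervalIntegral.integral_mul_const]
      congr 1; ext x; ring
    · intro i _
      have := (hf i).continuous
      exact Continuous.intervalIntegrable (by fun_prop) _ _

/-! ### The Weierstrass function as a second logarithmic derivative of theta -/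

open Filter Topology in
/-- Removing removable singularities along a lattice. -/
lemma exists_entire_extension (L : PeriodPair) {F : ℂ → ℂ}
    (hF : DifferentiableOn ℂ F (L.lattice : Set ℂ)ᶜ)
    (hl : ∀ l ∈ L.lattice, ∃ g : ℂ → ℂ, DifferentiableAt ℂ g l ∧ F =ᶠ[𝓝[≠] l] g) :
    ∃ F' : ℂ → ℂ, Differentiable ℂ F' ∧ ∀ z ∉ L.lattice, F' z = F z := by
  classical
  choose! g hg hFg using hl
  refine ⟨fun z => if z ∈ L.lattice then g z z else F z, fun z => ?_, fun z hz => by simp [hz]⟩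
  by_cases hz : z ∈ L.lattice
  · refine (hg z hz).congr_of_eventuallyEq ?_
    have h1 := L.compl_lattice_sdiff_singleton_mem_nhds z
    have h2 := eventually_nhdsWithin_iff.1 (hFg z hz)
    filter_upwards [h1, h2] with w hw1 hw2
    by_cases hwz : w = z
    · subst hwz; simp [hz]
    · have : w ∉ L.lattice := fun h => hw1 ⟨h, hwz⟩
      simp only [this, if_false]
      exact hw2 hwz
  · have ho : (L.lattice : Set ℂ)ᶜ ∈ 𝓝 z := L.isClosed_lattice.isOpen_compl.mem_nhds hz
    refine (hF.differentiableAt ho).congr_of_eventuallyEq ?_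
    filter_upwards [ho] with w hw
    simp only [show w ∉ L.lattice from hw, if_false]

lemma dense_compl_lattice (L : PeriodPair) : Dense (L.lattice : Set ℂ)ᶜ := by
  refine Set.Countable.dense_compl ℝ ?_
  have : Countable L.lattice := L.latticeBasis.equivFun.injective.countable
  exact Set.to_countable _

lemma eq_of_eq_off_lattice (L : PeriodPair) {F G : ℂ → ℂ} (hF : Continuous F) (hG : Continuous G)
    (h : ∀ z ∉ L.lattice, F z = G z) (z : ℂ) : F z = G z :=
  congrFun (hF.ext_on (dense_compl_lattice L) hG fun z hz => h z hz) z

/-- The period pair `(1, τ)`. -/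
def tauPair (τ : ℂ) (hτ : 0 < τ.im) : PeriodPair where
  ω₁ := 1
  ω₂ := τ
  indep := by
    rw [LinearIndependent.pair_iff]
    intro s t h
    have him := congrArg Complex.im h
    have hre := congrArg Complex.re h
    simp at him hre
    have ht : t = 0 := by
      rcases him with h | h
      · exact h
      · exact absurd h hτ.ne'
    subst ht
    simpa using hre

lemma one_mem (τ : ℂ) (hτ : 0 < τ.im) : (1 : ℂ) ∈ (tauPair τ hτ).lattice :=
  (tauPair τ hτ).ω₁_mem_lattice

lemma tau_mem (τ : ℂ) (hτ : 0 < τ.im) : τ ∈ (tauPair τ hτ).lattice :=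
  (tauPair τ hτ).ω₂_mem_lattice

/-- Translating `ϑ` by a lattice point multiplies it by the exponential of an affine function. -/
lemma th_add_lattice {τ : ℂ} (hτ : 0 < τ.im) {l : ℂ} (hl : l ∈ (tauPair τ hτ).lattice) :
    ∃ c d : ℂ, ∀ z, th 0 τ (z + l) = Complex.exp (c + d * z) * th 0 τ z := by
  let S : AddSubgroup ℂ :=
    { carrier := {l | ∃ c d : ℂ, ∀ z, th 0 τ (z + l) = Complex.exp (c + d * z) * th 0 τ z}
      zero_mem' := ⟨0, 0, by simp⟩
      add_mem' := by
        rintro a b ⟨c, d, h⟩ ⟨c', d', h'⟩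
        refine ⟨c + c' + d' * a, d + d', fun z => ?_⟩
        rw [← add_assoc, h', h, ← mul_assoc, ← Complex.exp_add]
        congr 2; ring
      neg_mem' := by
        rintro a ⟨c, d, h⟩
        refine ⟨-c + d * a, -d, fun z => ?_⟩
        have := h (z + -a)
        rw [neg_add_cancel_right] at this
        rw [this, ← mul_assoc, ← Complex.exp_add,
          show -c + d * a + -d * z + (c + d * (z + -a)) = 0 by ring, Complex.exp_zero, one_mul] }
  have h1 : (1 : ℂ) ∈ S := ⟨π * I, 0, fun z => by rw [th_add_one, zero_mul, add_zero, exp_pi_mul_I]; ring⟩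
  have h2 : τ ∈ S := ⟨π * I - π * I * τ, -2 * π * I, fun z => by
    rw [th_add_tau, show π * I - π * I * τ + -2 * π * I * z = π * I + (-π * I * τ - 2 * π * I * z) by
      ring, Complex.exp_add, exp_pi_mul_I]; ring⟩
  obtain ⟨m, n, rfl⟩ := PeriodPair.mem_lattice.1 hl
  have := S.add_mem (S.zsmul_mem h1 m) (S.zsmul_mem h2 n)
  have hmem : (m * 1 + n * τ : ℂ) ∈ S := by simpa using this
  exact hmem

lemma differentiable_th (k : ℕ) {τ : ℂ} (hτ : 0 < τ.im) : Differentiable ℂ (th k τ) :=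
  fun z => (hasDerivAt_th_z k hτ z).differentiableAt

lemma th_lattice {τ : ℂ} (hτ : 0 < τ.im) {l : ℂ} (hl : l ∈ (tauPair τ hτ).lattice) :
    th 0 τ l = 0 := by
  obtain ⟨c, d, h⟩ := th_add_lattice hτ hl
  simpa [th_zero] using h 0

lemma th_one_lattice {τ : ℂ} (hτ : 0 < τ.im) {l : ℂ} (hl : l ∈ (tauPair τ hτ).lattice)
    (h0 : th 1 τ 0 = 0) : th 1 τ l = 0 := by
  obtain ⟨c, d, h⟩ := th_add_lattice hτ hl
  have e1 : HasDerivAt (fun z => th 0 τ (z + l)) (th 1 τ l) 0 := by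
    have := (hasDerivAt_th_z 0 hτ (0 + l)).comp_add_const 0 l
    simpa using this
  have e2 : HasDerivAt (fun z => Complex.exp (c + d * z) * th 0 τ z) 0 0 := by
    have hd : HasDerivAt (fun z : ℂ => Complex.exp (c + d * z)) (Complex.exp (c + d * 0) * (d * 1)) 0 :=
      (((hasDerivAt_id (0 : ℂ)).const_mul d).const_add c).cexp
    have := hd.fun_mul (hasDerivAt_th_z 0 hτ 0)
    simpa [th_zero, h0] using this
  simp only [h] at e1
  exact e1.unique e2

lemma th_succ_add_tau {τ : ℂ} (hτ : 0 < τ.im) (z : ℂ) :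
    th 1 τ (z + τ) = -Complex.exp (-π * I * τ - 2 * π * I * z) *
        (th 1 τ z - 2 * π * I * th 0 τ z) ∧
    th 2 τ (z + τ) = -Complex.exp (-π * I * τ - 2 * π * I * z) *
        (th 2 τ z - 4 * π * I * th 1 τ z + (2 * π * I) ^ 2 * th 0 τ z) := by
  have he : ∀ z, HasDerivAt (fun z : ℂ => -Complex.exp (-π * I * τ - 2 * π * I * z))
      (2 * π * I * Complex.exp (-π * I * τ - 2 * π * I * z)) z := fun z => by
    have := (((hasDerivAt_id z).const_mul (2 * π * I : ℂ)).const_sub (-π * I * τ : ℂ)).cexp.neg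
    convert! this using 1
    simp only [id, mul_one]; ring
  have h1 : ∀ z, th 1 τ (z + τ) = -Complex.exp (-π * I * τ - 2 * π * I * z) *
      (th 1 τ z - 2 * π * I * th 0 τ z) := fun z => by
    have e1 := (hasDerivAt_th_z 0 hτ (z + τ)).comp_add_const z τ
    have e2 := (he z).mul (hasDerivAt_th_z 0 hτ z)
    have : (fun z => th 0 τ (z + τ)) =
      (fun z : ℂ => -Complex.exp (-π * I * τ - 2 * π * I * z)) * th 0 τ := by
        ext z; simp [th_add_tau]
    rw [this] at e1
    rw [e1.unique e2]; ring
  refine ⟨h1 z, ?_⟩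
  have e1 := (hasDerivAt_th_z 1 hτ (z + τ)).comp_add_const z τ
  have e2 := (he z).mul ((hasDerivAt_th_z 1 hτ z).sub ((hasDerivAt_th_z 0 hτ z).const_mul (2 * π * I : ℂ)))
  have : (fun z => th 1 τ (z + τ)) =
    (fun z : ℂ => -Complex.exp (-π * I * τ - 2 * π * I * z)) *
      (th 1 τ - fun z => 2 * π * I * th 0 τ z) := by
      ext z; simp [h1]
  rw [this] at e1
  rw [e1.unique e2]
  simp only [Pi.sub_apply]; ring

lemma th_succ_add_one {τ : ℂ} (hτ : 0 < τ.im) (z : ℂ) :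
    th 1 τ (z + 1) = -th 1 τ z ∧ th 2 τ (z + 1) = -th 2 τ z := by
  have h1 : ∀ z, th 1 τ (z + 1) = -th 1 τ z := fun z => by
    have e1 := (hasDerivAt_th_z 0 hτ (z + 1)).comp_add_const z 1
    simp only [th_add_one] at e1
    exact e1.unique (hasDerivAt_th_z 0 hτ z).fun_neg
  refine ⟨h1 z, ?_⟩
  have e1 := (hasDerivAt_th_z 1 hτ (z + 1)).comp_add_const z 1
  simp only [h1] at e1
  exact e1.unique (hasDerivAt_th_z 1 hτ z).fun_neg

open Filter Topology in
lemma eventually_th_ne_zero {τ : ℂ} (hτ : 0 < τ.im) (z₀ : ℂ) : ∀ᶠ z in 𝓝[≠] z₀, th 0 τ z ≠ 0 := by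
  rcases ((differentiable_th 0 hτ).analyticAt z₀).eventually_eq_zero_or_eventually_ne_zero with h | h
  · exfalso
    obtain ⟨w, hw⟩ := exists_th_ne_zero hτ
    have ha : AnalyticOnNhd ℂ (th 0 τ) Set.univ := fun z _ => (differentiable_th 0 hτ).analyticAt z
    exact hw (congrFun (ha.eq_of_eventuallyEq (g := 0) (fun z _ => analyticAt_const) h) w)
  · exact h

open Filter Topology in
/-- The leading term of `℘` at the origin is `1/z²`. -/
lemma tendsto_sq_mul_wp (L : PeriodPair) :
    Tendsto (fun z => z ^ 2 * L.weierstrassP z) (𝓝[≠] 0) (𝓝 1) := by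
  have hc : ContinuousAt (L.weierstrassPExcept 0) 0 :=
    ((L.differentiableOn_weierstrassPExcept 0).differentiableAt
      (L.compl_lattice_sdiff_singleton_mem_nhds 0)).continuousAt
  have h : Tendsto (fun z : ℂ => z ^ 2 * L.weierstrassPExcept 0 z + 1) (𝓝[≠] 0) (𝓝 1) := by
    have : ContinuousAt (fun z : ℂ => z ^ 2 * L.weierstrassPExcept 0 z + 1) 0 := by fun_prop
    simpa [ContinuousAt] using! this.tendsto.mono_left (nhdsWithin_le_nhds (s := {0}ᶜ))
  refine h.congr' ?_
  filter_upwards [self_mem_nhdsWithin] with z hz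
  have hz : z ≠ 0 := hz
  have := L.weierstrassPExcept_add ⟨0, L.lattice.zero_mem⟩ z
  simp only at this
  rw [← this]
  simp
  field_simp

open Filter Topology in
lemma eventually_notMem_lattice (L : PeriodPair) (z : ℂ) : ∀ᶠ w in 𝓝[≠] z, w ∉ L.lattice := by
  rw [eventually_nhdsWithin_iff]
  filter_upwards [L.compl_lattice_sdiff_singleton_mem_nhds z] with w hw hne hl
  exact hw ⟨hl, hne⟩

open Filter Topology in
/-- Products `f ℘` extend over a lattice point `l` as soon as `f(z)/(z-l)²` does. -/
lemma exists_local_extension (L : PeriodPair) {f g : ℂ → ℂ} {l : ℂ} (hl : l ∈ L.lattice)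
    (hf : DifferentiableAt ℂ f l) (hg : DifferentiableAt ℂ g l)
    (hfg : ∀ z ≠ l, f z = (z - l) ^ 2 * g z) :
    ∃ h : ℂ → ℂ, DifferentiableAt ℂ h l ∧ (fun z => f z * L.weierstrassP z) =ᶠ[𝓝[≠] l] h := by
  have hc : DifferentiableAt ℂ (L.weierstrassPExcept l) l :=
    (L.differentiableOn_weierstrassPExcept l).differentiableAt
      (L.compl_lattice_sdiff_singleton_mem_nhds l)
  refine ⟨fun z => f z * (L.weierstrassPExcept l z - 1 / l ^ 2) + g z, by fun_prop, ?_⟩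
  filter_upwards [self_mem_nhdsWithin] with z hz
  have hz : z ≠ l := hz
  have := L.weierstrassPExcept_add ⟨l, hl⟩ z
  simp only at this
  rw [← this]
  have hz' : (z - l) ≠ 0 := sub_ne_zero.2 hz
  have e : f z * (1 / (z - l) ^ 2) = g z := by rw [hfg z hz]; field_simp
  linear_combination e

/-- Division of an entire function by a linear factor at one of its zeros. -/
lemma dslope_facts {f : ℂ → ℂ} (hf : Differentiable ℂ f) {l : ℂ} (h0 : f l = 0) :
    Differentiable ℂ (dslope f l) ∧ ∀ z, f z = (z - l) * dslope f l z := by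
  constructor
  · rw [← differentiableOn_univ] at hf ⊢
    exact (Complex.differentiableOn_dslope Filter.univ_mem).2 hf
  · intro z
    have := sub_smul_dslope f l z
    rw [smul_eq_mul, h0, sub_zero] at this
    exact this.symm

open Filter Topology in
/-- If `ϑ'(0)` vanished, `ϑ℘` would be a theta function of degree one, hence proportional to `ϑ`. -/
lemma th_one_ne_zero {τ : ℂ} (hτ : 0 < τ.im) : th 1 τ 0 ≠ 0 := by
  intro h0
  set L := tauPair τ hτ with hL
  have hd := differentiable_th 0 hτ
  obtain ⟨F, hFd, hF⟩ := exists_entire_extension L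
    (F := fun z => th 0 τ z * L.weierstrassP z)
    (hd.differentiableOn.mul L.differentiableOn_weierstrassP) (fun l hl => by
      obtain ⟨d1, e1⟩ := dslope_facts hd (th_lattice hτ hl)
      have h1 : dslope (th 0 τ) l l = 0 := by
        rw [dslope_same, (hasDerivAt_th_z 0 hτ l).deriv, th_one_lattice hτ hl h0]
      obtain ⟨d2, e2⟩ := dslope_facts d1 h1
      exact exists_local_extension L hl (hd l) (d2 l) fun z _ => by rw [e1, e2]; ring)
  have hF1 : ∀ z, F (z + 1) = -F z := by
    refine eq_of_eq_off_lattice L (by have := hFd.continuous; fun_prop)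
      (by have := hFd.continuous; fun_prop) fun z hz => ?_
    have hz' : z + 1 ∉ L.lattice := fun h => hz (by simpa using L.lattice.sub_mem h (one_mem τ hτ))
    have := L.weierstrassP_add_coe z ⟨1, one_mem τ hτ⟩
    simp only at this
    rw [hF _ hz, hF _ hz', th_add_one, this]; ring
  have hF2 : ∀ z, F (z + τ) = -Complex.exp (-π * I * τ - 2 * π * I * z) * F z := by
    refine eq_of_eq_off_lattice L (by have := hFd.continuous; fun_prop)
      (by have := hFd.continuous; fun_prop) fun z hz => ?_
    have hz' : z + τ ∉ L.lattice := fun h => hz (by simpa using L.lattice.sub_mem h (tau_mem τ hτ))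
    have := L.weierstrassP_add_coe z ⟨τ, tau_mem τ hτ⟩
    simp only at this
    rw [hF _ hz, hF _ hz', th_add_tau, this]; ring
  -- The factor `e^{πiz}` turns antiperiodicity under `z ↦ z + 1` into periodicity.
  obtain ⟨a, ha, hsum⟩ := theta_dependent (τ := τ) (C := -1) (N := 1) (by norm_num) one_pos
    (fun i z => Complex.exp (π * I * z) * (![th 0 τ, F] : Fin 2 → ℂ → ℂ) i z)
    (fun i => by fin_cases i <;> simp <;> fun_prop)
    (fun i z => by
      rw [mul_add, Complex.exp_add, mul_one, exp_pi_mul_I]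
      fin_cases i <;> simp [th_add_one, hF1])
    (fun i z => by
      have : Complex.exp (π * I * (z + τ)) * Complex.exp (-π * I * τ - 2 * π * I * z)
          = Complex.exp (-(2 * π * I * (1 : ℕ) * z)) * Complex.exp (π * I * z) := by
        rw [← Complex.exp_add, ← Complex.exp_add]; congr 1; push_cast; ring
      fin_cases i
      · simp only [Fin.zero_eta, Matrix.cons_val_zero, th_add_tau]
        linear_combination (-th 0 τ z) * this
      · simp only [Fin.mk_one, Matrix.cons_val_one, Matrix.cons_val_fin_one, hF2]
        linear_combination (-F z) * this)
  replace hsum : ∀ z, a 0 * (Complex.exp (π * I * z) * th 0 τ z) +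
      a 1 * (Complex.exp (π * I * z) * F z) = 0 :=
    fun z => (Fin.sum_univ_two _).symm.trans (hsum z)
  have hz : ∀ᶠ z in 𝓝[≠] (0 : ℂ), a 0 + a 1 * L.weierstrassP z = 0 := by
    filter_upwards [eventually_th_ne_zero hτ 0, eventually_notMem_lattice L 0] with z h1 h2
    have := hsum z
    rw [hF z h2] at this
    have e : (Complex.exp (π * I * z) * th 0 τ z) * (a 0 + a 1 * L.weierstrassP z) = 0 := by
      linear_combination this
    exact (mul_eq_zero.1 e).resolve_left (mul_ne_zero (Complex.exp_ne_zero _) h1)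
  -- The double pole of `℘` at the origin rules out a nontrivial relation.
  have ha1 : a 1 = 0 := by
    have t1 : Tendsto (fun z : ℂ => z ^ 2 * (a 0 + a 1 * L.weierstrassP z)) (𝓝[≠] 0)
        (𝓝 (0 * a 0 + a 1 * 1)) := by
      have t0 : Tendsto (fun z : ℂ => z ^ 2) (𝓝[≠] 0) (𝓝 0) :=
        ((continuous_pow 2).tendsto' (0 : ℂ) 0 (by simp)).mono_left nhdsWithin_le_nhds
      refine ((t0.mul_const (a 0)).add ((tendsto_sq_mul_wp L).const_mul (a 1))).congr fun z => ?_
      ring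
    have t2 : Tendsto (fun z : ℂ => z ^ 2 * (a 0 + a 1 * L.weierstrassP z)) (𝓝[≠] 0) (𝓝 0) :=
      tendsto_const_nhds.congr' (by filter_upwards [hz] with z h; rw [h, mul_zero])
    simpa using tendsto_nhds_unique t1 t2
  have ha0 : a 0 = 0 := by
    obtain ⟨z, h⟩ := hz.exists
    simpa [ha1] using h
  exact ha (by ext i; fin_cases i <;> simp [ha0, ha1])

open Filter Topology in
/-- `℘ = κ − (log ϑ)''` for some constant `κ`: the functions `ϑ²`, `ϑϑ''−ϑ'²` and `ϑ²℘` are theta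
functions of degree two, hence linearly dependent. -/
lemma exists_wp_eq {τ : ℂ} (hτ : 0 < τ.im) : ∃ κ : ℂ, ∀ z, th 0 τ z ≠ 0 →
    (tauPair τ hτ).weierstrassP z
      = κ - (th 0 τ z * th 2 τ z - th 1 τ z ^ 2) / th 0 τ z ^ 2 := by
  set L := tauPair τ hτ with hL
  have hd := differentiable_th 0 hτ
  have hd1 := differentiable_th 1 hτ
  have hd2 := differentiable_th 2 hτ
  obtain ⟨F, hFd, hF⟩ := exists_entire_extension L
    (F := fun z => th 0 τ z ^ 2 * L.weierstrassP z)
    ((hd.pow 2).differentiableOn.mul L.differentiableOn_weierstrassP) (fun l hl => by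
      obtain ⟨d1, e1⟩ := dslope_facts hd (th_lattice hτ hl)
      exact exists_local_extension L hl (f := fun z => th 0 τ z ^ 2) ((hd.pow 2) l)
        ((d1.pow 2) l) fun z _ => by simp only [Pi.pow_apply]; rw [e1]; ring)
  have hF1 : ∀ z, F (z + 1) = F z := by
    refine eq_of_eq_off_lattice L (by have := hFd.continuous; fun_prop)
      (by have := hFd.continuous; fun_prop) fun z hz => ?_
    have hz' : z + 1 ∉ L.lattice := fun h => hz (by simpa using L.lattice.sub_mem h (one_mem τ hτ))
    have := L.weierstrassP_add_coe z ⟨1, one_mem τ hτ⟩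
    simp only at this
    rw [hF _ hz, hF _ hz', th_add_one, this]; ring
  have hsq : ∀ z : ℂ, Complex.exp (-π * I * τ - 2 * π * I * z) ^ 2
      = Complex.exp (-(2 * π * I * τ)) * Complex.exp (-(2 * π * I * (2 : ℕ) * z)) := fun z => by
    rw [← Complex.exp_nat_mul, ← Complex.exp_add]; congr 1; push_cast; ring
  have hF2 : ∀ z, F (z + τ) = Complex.exp (-(2 * π * I * τ)) *
      Complex.exp (-(2 * π * I * (2 : ℕ) * z)) * F z := by
    refine eq_of_eq_off_lattice L (by have := hFd.continuous; fun_prop)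
      (by have := hFd.continuous; fun_prop) fun z hz => ?_
    have hz' : z + τ ∉ L.lattice := fun h => hz (by simpa using L.lattice.sub_mem h (tau_mem τ hτ))
    have := L.weierstrassP_add_coe z ⟨τ, tau_mem τ hτ⟩
    simp only at this
    rw [hF _ hz, hF _ hz', th_add_tau, this, ← hsq]; ring
  obtain ⟨a, ha, hsum⟩ := theta_dependent (τ := τ) (C := Complex.exp (-(2 * π * I * τ))) (N := 2)
    (Complex.exp_ne_zero _) two_pos
    (![fun z => th 0 τ z ^ 2, fun z => th 0 τ z * th 2 τ z - th 1 τ z ^ 2, F] : Fin 3 → ℂ → ℂ)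
    (fun i => by fin_cases i <;> simp <;> fun_prop)
    (fun i z => by
      fin_cases i <;> simp [th_add_one, hF1, th_succ_add_one hτ])
    (fun i z => by
      rw [← hsq]
      fin_cases i
      · simp only [Fin.zero_eta, Matrix.cons_val_zero, th_add_tau]; ring
      · simp only [Fin.mk_one, Matrix.cons_val_one, Matrix.cons_val_zero, th_add_tau,
          th_succ_add_tau hτ]
        ring
      · simp only [Fin.reduceFinMk, Matrix.cons_val, hF2, ← hsq])
  replace hsum : ∀ z, a 0 * th 0 τ z ^ 2 + a 1 * (th 0 τ z * th 2 τ z - th 1 τ z ^ 2)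
      + a 2 * F z = 0 :=
    fun z => (Fin.sum_univ_three _).symm.trans (hsum z)
  have hrel : ∀ z ∉ L.lattice, a 0 * th 0 τ z ^ 2 + a 1 * (th 0 τ z * th 2 τ z - th 1 τ z ^ 2)
      + a 2 * (th 0 τ z ^ 2 * L.weierstrassP z) = 0 := fun z hz => by
    rw [← hF z hz]; exact hsum z
  -- Compare both sides as `z → 0`, where `ϑϑ'' − ϑ'² → −ϑ'(0)²` and `ϑ²℘ → ϑ'(0)²`.
  have h12 : a 2 = a 1 := by
    obtain ⟨d1, e1⟩ := dslope_facts hd (th_zero τ)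
    have t1 : Tendsto (fun z : ℂ => a 0 * th 0 τ z ^ 2 + a 1 * (th 0 τ z * th 2 τ z - th 1 τ z ^ 2))
        (𝓝[≠] 0) (𝓝 (-(a 1 * th 1 τ 0 ^ 2))) := by
      have c0 := hd.continuous
      have c1 := hd1.continuous
      have c2 := hd2.continuous
      refine (Continuous.tendsto' (by fun_prop) _ _ ?_).mono_left nhdsWithin_le_nhds
      simp [th_zero]
    have t2 : Tendsto (fun z : ℂ => a 2 * (th 0 τ z ^ 2 * L.weierstrassP z))
        (𝓝[≠] 0) (𝓝 (a 2 * (th 1 τ 0 ^ 2 * 1))) := by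
      have c : Tendsto (fun z => dslope (th 0 τ) 0 z ^ 2) (𝓝[≠] 0) (𝓝 (th 1 τ 0 ^ 2)) := by
        have := d1.continuous
        refine (Continuous.tendsto' (by fun_prop) _ _ ?_).mono_left nhdsWithin_le_nhds
        rw [dslope_same, (hasDerivAt_th_z 0 hτ 0).deriv]
      refine ((c.mul (tendsto_sq_mul_wp L)).const_mul (a 2)).congr fun z => ?_
      rw [e1 z]; ring
    have t3 : Tendsto (fun z : ℂ => a 0 * th 0 τ z ^ 2 +
        a 1 * (th 0 τ z * th 2 τ z - th 1 τ z ^ 2) + a 2 * (th 0 τ z ^ 2 * L.weierstrassP z))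
        (𝓝[≠] 0) (𝓝 0) :=
      tendsto_const_nhds.congr' (by
        filter_upwards [eventually_notMem_lattice L 0] with z h; rw [hrel z h])
    have := tendsto_nhds_unique (t1.add t2) t3
    have e : (a 2 - a 1) * th 1 τ 0 ^ 2 = 0 := by linear_combination this
    exact sub_eq_zero.1 ((mul_eq_zero.1 e).resolve_right (pow_ne_zero 2 (th_one_ne_zero hτ)))
  have ha1 : a 1 ≠ 0 := by
    intro h1
    obtain ⟨z, hz, hz'⟩ := ((eventually_th_ne_zero hτ 0).and (eventually_notMem_lattice L 0)).exists
    have := hrel z hz'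
    rw [h12, h1] at this
    have ha0 : a 0 = 0 := by simpa [hz] using this
    exact ha (by ext i; fin_cases i <;> simp [ha0, h12, h1])
  refine ⟨-a 0 / a 1, fun z hz => ?_⟩
  have := hrel z (fun h => hz (th_lattice hτ h))
  rw [h12] at this
  field_simp
  linear_combination this

/-! ### Eisenstein series, lattice invariants and the eta function -/

lemma tsum_sigma_eq (k : ℕ) (τ : ℂ) :
    ∑' n : ℕ+, (ArithmeticFunction.sigma k n : ℂ) * Complex.exp (2 * π * I * τ) ^ (n : ℕ)
      = ∑' n : ℕ, (sigmaD k (n + 1) : ℂ) * Complex.exp (2 * π * I * τ * (n + 1)) := by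
  rw [tsum_pnat_eq_tsum_succ
    (f := fun n : ℕ => (ArithmeticFunction.sigma k n : ℂ) * Complex.exp (2 * π * I * τ) ^ n)]
  refine tsum_congr fun n => ?_
  rw [ArithmeticFunction.sigma_apply, sigmaD, ← Complex.exp_nat_mul]
  congr 2; push_cast; ring

lemma G_eq {τ : ℂ} (hτ : 0 < τ.im) {k : ℕ} (hk : 3 ≤ k) (hk2 : Even k) :
    (tauPair τ hτ).G k = 2 * riemannZeta k + 2 * ((-2 * π * I) ^ k / (Nat.factorial (k - 1))) *
      ∑' n : ℕ, (sigmaD (k - 1) (n + 1) : ℂ) * Complex.exp (2 * π * I * τ * (n + 1)) := by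
  have h := tsum_eisSummand_eq_tsum_sigma_mul_cexp_pow hk hk2 ⟨τ, hτ⟩
  rw [UpperHalfPlane.coe_mk, tsum_sigma_eq] at h
  rw [← h, PeriodPair.G, ← ((tauPair τ hτ).latticeEquivProd.symm.toEquiv).tsum_eq,
    ← (Equiv.prodComm ℤ ℤ).tsum_eq, ← (finTwoArrowEquiv ℤ).tsum_eq]
  refine tsum_congr fun v => ?_
  have := (tauPair τ hτ).latticeEquiv_symm_apply (v 1, v 0)
  change ((((tauPair τ hτ).latticeEquivProd.symm (v 1, v 0)).1) ^ k)⁻¹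
    = ((v 0 : ℂ) * τ + v 1) ^ (-(k : ℤ))
  rw [show ((tauPair τ hτ).latticeEquivProd.symm (v 1, v 0)).1 = v 1 * 1 + v 0 * τ from this,
    zpow_neg, zpow_natCast]
  congr 2; ring

lemma g₂_eq {τ : ℂ} (hτ : 0 < τ.im) : (tauPair τ hτ).g₂ = 4 * π ^ 4 / 3 * Eis4 τ := by
  rw [PeriodPair.g₂, G_eq hτ (by norm_num) (by decide), Eis4, show ((4 : ℕ) : ℂ) = 4 by norm_num,
    riemannZeta_four]
  have hI : (I : ℂ) ^ 4 = 1 := I_pow_four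
  norm_num [Nat.factorial, mul_pow, hI]
  ring

lemma riemannZeta_six : riemannZeta 6 = π ^ 6 / 945 := by
  have h := riemannZeta_two_mul_nat (k := 3) (by norm_num)
  have hb : bernoulli 6 = 1 / 42 := by
    rw [bernoulli_eq_bernoulli'_of_ne_one (by norm_num), bernoulli'_def]
    norm_num [Finset.sum_range_succ, bernoulli'_zero, bernoulli'_one, bernoulli'_two,
      bernoulli'_three, bernoulli'_four, Nat.choose]
    rw [bernoulli'_def]
    norm_num [Finset.sum_range_succ, bernoulli'_zero, bernoulli'_one, bernoulli'_two,
      bernoulli'_three, bernoulli'_four, Nat.choose]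
  norm_num [hb, Nat.factorial] at h
  rw [h]; ring

lemma g₃_eq {τ : ℂ} (hτ : 0 < τ.im) : (tauPair τ hτ).g₃ = 8 * π ^ 6 / 27 * Eis6 τ := by
  rw [PeriodPair.g₃, G_eq hτ (by norm_num) (by decide), Eis6, show ((6 : ℕ) : ℂ) = 6 by norm_num,
    riemannZeta_six]
  have hI : (I : ℂ) ^ 6 = -1 := by rw [show 6 = 4 + 2 from rfl, pow_add, I_pow_four, I_sq]; norm_num
  norm_num [Nat.factorial, mul_pow, hI]
  ring

lemma Eis2_eq {τ : ℂ} (hτ : 0 < τ.im) : Eis2 τ = EisensteinSeries.E2 ⟨τ, hτ⟩ := by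
  rw [EisensteinSeries.E2_eq_tsum_cexp, Eis2, UpperHalfPlane.coe_mk, tsum_sigma_eq]

open ModularForm in
lemma Eis4_eq {τ : ℂ} (hτ : 0 < τ.im) : Eis4 τ = E₄ ⟨τ, hτ⟩ := by
  have h := EisensteinSeries.q_expansion_bernoulli (k := 4) (by norm_num) (by decide) ⟨τ, hτ⟩
  simp only [zpow_natCast] at h
  rw [h, tsum_sigma_eq, Eis4,
    bernoulli_eq_bernoulli'_of_ne_one (by norm_num), bernoulli'_four]
  norm_num

open ModularForm in
lemma Eis6_eq {τ : ℂ} (hτ : 0 < τ.im) : Eis6 τ = E₆ ⟨τ, hτ⟩ := by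
  have hz := riemannZeta_six
  have h := EisensteinSeries.q_expansion_riemannZeta (k := 6) (by norm_num) (by decide) ⟨τ, hτ⟩
  simp only [zpow_natCast] at h
  have hI : (I : ℂ) ^ 6 = -1 := by rw [show 6 = 4 + 2 from rfl, pow_add, I_pow_four, I_sq]; norm_num
  rw [h, tsum_sigma_eq, Eis6, show ((6 : ℕ) : ℂ) = 6 by norm_num, hz]
  have hpi : (π : ℂ) ≠ 0 := by simp [pi_ne_zero]
  norm_num [Nat.factorial, mul_pow, hI]
  field_simp
  ring

lemma isOpen_im_pos : IsOpen {t : ℂ | 0 < t.im} := isOpen_lt continuous_const Complex.continuous_im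

open UpperHalfPlane MatrixGroups in
lemma differentiableAt_modular {k : ℤ} (f : ModularForm 𝒮ℒ k) {g : ℂ → ℂ}
    (hg : ∀ t (ht : 0 < t.im), g t = f ⟨t, ht⟩) {τ : ℂ} (hτ : 0 < τ.im) : DifferentiableAt ℂ g τ := by
  have h := UpperHalfPlane.mdifferentiable_iff.1 f.holo'
  refine (h.differentiableAt (isOpen_im_pos.mem_nhds hτ)).congr_of_eventuallyEq ?_
  filter_upwards [isOpen_im_pos.mem_nhds hτ] with t ht
  rw [hg t ht, Function.comp, ofComplex_apply_of_im_pos ht]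
  rfl

lemma differentiableAt_Eis4 {τ : ℂ} (hτ : 0 < τ.im) : DifferentiableAt ℂ Eis4 τ :=
  differentiableAt_modular _ (fun _ ht => Eis4_eq ht) hτ

lemma differentiableAt_Eis6 {τ : ℂ} (hτ : 0 < τ.im) : DifferentiableAt ℂ Eis6 τ :=
  differentiableAt_modular _ (fun _ ht => Eis6_eq ht) hτ

lemma etaD_eq (τ : ℂ) : etaD τ = ModularForm.eta τ := by
  rw [etaD, ModularForm.eta, Function.Periodic.qParam]
  congr 1
  · congr 1; push_cast; ring
  · refine tprod_congr fun n => ?_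
    rw [ModularForm.eta_q_eq_cexp]
    congr 2; ring

lemma etaD_ne_zero {τ : ℂ} (hτ : 0 < τ.im) : etaD τ ≠ 0 := by
  rw [etaD_eq]; exact ModularForm.eta_ne_zero hτ

/-- `E₂` is the logarithmic derivative of `η`, up to the factor `πi/12`. -/
lemma hasDerivAt_etaD {τ : ℂ} (hτ : 0 < τ.im) :
    HasDerivAt etaD (π * I / 12 * Eis2 τ * etaD τ) τ := by
  have h := ModularForm.logDeriv_eta_eq_E2 ⟨τ, hτ⟩
  rw [logDeriv_apply, UpperHalfPlane.coe_mk, ← Eis2_eq hτ, ← etaD_eq,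
    div_eq_iff (etaD_ne_zero hτ)] at h
  rw [show etaD = ModularForm.eta from funext etaD_eq] at h ⊢
  rw [← h]
  exact (ModularForm.differentiableAt_eta_of_mem_upperHalfPlaneSet hτ).hasDerivAt

lemma etaD_pow {τ : ℂ} (hτ : 0 < τ.im) : etaD τ ^ 24 = (Eis4 τ ^ 3 - Eis6 τ ^ 2) / 1728 := by
  have h := ModularForm.discriminant_eq_E₄_cube_sub_E₆_sq ⟨τ, hτ⟩
  rw [Eis4_eq hτ, Eis6_eq hτ, ← h, etaD_eq]
  rfl

/-! ### Ramanujan's differential equations from the heat equation -/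

/-- The logarithmic derivative `A₀ = ϑ'/ϑ`. -/
def lA0 (τ z : ℂ) : ℂ := th 1 τ z / th 0 τ z

/-- The second logarithmic derivative `A₁ = (log ϑ)''`. -/
def lA1 (τ z : ℂ) : ℂ := th 2 τ z / th 0 τ z - (th 1 τ z / th 0 τ z) ^ 2

/-- The third logarithmic derivative `A₂ = (log ϑ)'''`. -/
def lA2 (τ z : ℂ) : ℂ :=
  th 3 τ z / th 0 τ z - 3 * (th 1 τ z / th 0 τ z) * (th 2 τ z / th 0 τ z)
    + 2 * (th 1 τ z / th 0 τ z) ^ 3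

/-- The fourth logarithmic derivative `A₃ = (log ϑ)''''`. -/
def lA3 (τ z : ℂ) : ℂ :=
  th 4 τ z / th 0 τ z - 4 * (th 1 τ z / th 0 τ z) * (th 3 τ z / th 0 τ z)
    - 3 * (th 2 τ z / th 0 τ z) ^ 2 + 12 * (th 1 τ z / th 0 τ z) ^ 2 * (th 2 τ z / th 0 τ z)
    - 6 * (th 1 τ z / th 0 τ z) ^ 4

/-- The fifth logarithmic derivative `A₄` of `ϑ`. -/
def lA4 (τ z : ℂ) : ℂ :=
  th 5 τ z / th 0 τ z - 5 * (th 1 τ z / th 0 τ z) * (th 4 τ z / th 0 τ z)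
    - 10 * (th 2 τ z / th 0 τ z) * (th 3 τ z / th 0 τ z)
    + 20 * (th 1 τ z / th 0 τ z) ^ 2 * (th 3 τ z / th 0 τ z)
    + 30 * (th 1 τ z / th 0 τ z) * (th 2 τ z / th 0 τ z) ^ 2
    - 60 * (th 1 τ z / th 0 τ z) ^ 3 * (th 2 τ z / th 0 τ z) + 24 * (th 1 τ z / th 0 τ z) ^ 5

lemma hasDerivAt_ratio_z (k : ℕ) {τ : ℂ} (hτ : 0 < τ.im) {z : ℂ} (h : th 0 τ z ≠ 0) :
    HasDerivAt (fun z => th k τ z / th 0 τ z)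
      (th (k + 1) τ z / th 0 τ z - th k τ z / th 0 τ z * (th 1 τ z / th 0 τ z)) z := by
  convert! (hasDerivAt_th_z k hτ z).div (hasDerivAt_th_z 0 hτ z) h using 1
  field_simp

lemma hasDerivAt_ratio_tau (k : ℕ) {τ : ℂ} (hτ : 0 < τ.im) {z : ℂ} (h : th 0 τ z ≠ 0) :
    HasDerivAt (fun t => th k t z / th 0 t z)
      (1 / (4 * π * I) * (th (k + 2) τ z / th 0 τ z
        - th k τ z / th 0 τ z * (th 2 τ z / th 0 τ z))) τ := by
  convert! (hasDerivAt_th_tau k hτ z).div (hasDerivAt_th_tau 0 hτ z) h using 1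
  field_simp

lemma hasDerivAt_lA1_z {τ : ℂ} (hτ : 0 < τ.im) {z : ℂ} (h : th 0 τ z ≠ 0) :
    HasDerivAt (lA1 τ) (lA2 τ z) z := by
  convert! (hasDerivAt_ratio_z 2 hτ h).sub ((hasDerivAt_ratio_z 1 hτ h).pow 2) using 1
  simp only [lA2]; push_cast; ring

lemma hasDerivAt_lA2_z {τ : ℂ} (hτ : 0 < τ.im) {z : ℂ} (h : th 0 τ z ≠ 0) :
    HasDerivAt (lA2 τ) (lA3 τ z) z := by
  convert! ((hasDerivAt_ratio_z 3 hτ h).sub (((hasDerivAt_ratio_z 1 hτ h).const_mul 3).mul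
    (hasDerivAt_ratio_z 2 hτ h))).add (((hasDerivAt_ratio_z 1 hτ h).pow 3).const_mul 2) using 1
  simp only [lA3]; push_cast; ring

lemma hasDerivAt_lA3_z {τ : ℂ} (hτ : 0 < τ.im) {z : ℂ} (h : th 0 τ z ≠ 0) :
    HasDerivAt (lA3 τ) (lA4 τ z) z := by
  have r1 := hasDerivAt_ratio_z 1 hτ h
  have r2 := hasDerivAt_ratio_z 2 hτ h
  have r3 := hasDerivAt_ratio_z 3 hτ h
  have r4 := hasDerivAt_ratio_z 4 hτ h
  convert! (((r4.sub ((r1.const_mul 4).mul r3)).sub ((r2.pow 2).const_mul 3)).add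
    (((r1.pow 2).const_mul 12).mul r2)).sub ((r1.pow 4).const_mul 6) using 1
  simp only [lA4, Pi.pow_apply]; push_cast; ring

lemma hasDerivAt_lA1_tau {τ : ℂ} (hτ : 0 < τ.im) {z : ℂ} (h : th 0 τ z ≠ 0) :
    HasDerivAt (fun t => lA1 t z)
      (1 / (4 * π * I) * (2 * lA1 τ z ^ 2 + 2 * lA0 τ z * lA2 τ z + lA3 τ z)) τ := by
  convert! (hasDerivAt_ratio_tau 2 hτ h).sub ((hasDerivAt_ratio_tau 1 hτ h).pow 2) using 1
  simp only [lA0, lA1, lA2, lA3]; push_cast; ring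

lemma hasDerivAt_lA2_tau {τ : ℂ} (hτ : 0 < τ.im) {z : ℂ} (h : th 0 τ z ≠ 0) :
    HasDerivAt (fun t => lA2 t z)
      (1 / (4 * π * I) * (6 * lA1 τ z * lA2 τ z + 2 * lA0 τ z * lA3 τ z + lA4 τ z)) τ := by
  convert! ((hasDerivAt_ratio_tau 3 hτ h).sub (((hasDerivAt_ratio_tau 1 hτ h).const_mul 3).mul
    (hasDerivAt_ratio_tau 2 hτ h))).add (((hasDerivAt_ratio_tau 1 hτ h).pow 3).const_mul 2) using 1
  simp only [lA0, lA1, lA2, lA3, lA4]; push_cast; ring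

lemma differentiableAt_lA4_tau {τ : ℂ} (hτ : 0 < τ.im) {z : ℂ} (h : th 0 τ z ≠ 0) :
    DifferentiableAt ℂ (fun t => lA4 t z) τ := by
  have r1 := (hasDerivAt_ratio_tau 1 hτ h).differentiableAt
  have r2 := (hasDerivAt_ratio_tau 2 hτ h).differentiableAt
  have r3 := (hasDerivAt_ratio_tau 3 hτ h).differentiableAt
  have r4 := (hasDerivAt_ratio_tau 4 hτ h).differentiableAt
  have r5 := (hasDerivAt_ratio_tau 5 hτ h).differentiableAt
  unfold lA4
  fun_prop

/-- The constant `κ(τ)` in `℘ = κ − (log ϑ)''`; it is `0` by convention off the upper half-plane. -/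
def kap (τ : ℂ) : ℂ := by
  classical exact if h : 0 < τ.im then (exists_wp_eq h).choose else 0

lemma wp_eq {τ : ℂ} (hτ : 0 < τ.im) {z : ℂ} (h : th 0 τ z ≠ 0) :
    (tauPair τ hτ).weierstrassP z = kap τ - lA1 τ z := by
  rw [kap, dif_pos hτ, (exists_wp_eq hτ).choose_spec z h, lA1]
  field_simp

/-- The invariant `g₂` of the lattice `ℤ + ℤτ` in terms of `E₄`. -/
def gg2 (τ : ℂ) : ℂ := 4 * π ^ 4 / 3 * Eis4 τ

/-- The invariant `g₃` of the lattice `ℤ + ℤτ` in terms of `E₆`. -/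
def gg3 (τ : ℂ) : ℂ := 8 * π ^ 6 / 27 * Eis6 τ

lemma isOpen_th_ne_z {τ : ℂ} (hτ : 0 < τ.im) : IsOpen {z | th 0 τ z ≠ 0} :=
  isOpen_ne_fun (differentiable_th 0 hτ).continuous continuous_const

/-- The Weierstrass differential equation for `(log ϑ)''`. -/
lemma lA2_sq {τ : ℂ} (hτ : 0 < τ.im) {z : ℂ} (h : th 0 τ z ≠ 0) :
    lA2 τ z ^ 2 = 4 * (kap τ - lA1 τ z) ^ 3 - gg2 τ * (kap τ - lA1 τ z) - gg3 τ := by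
  have hz : z ∉ (tauPair τ hτ).lattice := fun hl => h (th_lattice hτ hl)
  have hd : deriv (tauPair τ hτ).weierstrassP z = -lA2 τ z := by
    have : (tauPair τ hτ).weierstrassP =ᶠ[nhds z] fun w => kap τ - lA1 τ w := by
      filter_upwards [(isOpen_th_ne_z hτ).mem_nhds h] with w hw
      exact wp_eq hτ hw
    rw [this.deriv_eq]
    exact ((hasDerivAt_lA1_z hτ h).const_sub _).deriv
  have := (tauPair τ hτ).derivWeierstrassP_sq z hz
  rw [← PeriodPair.deriv_weierstrassP, hd, wp_eq hτ h, g₂_eq, g₃_eq] at this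
  rw [gg2, gg3, ← this]; ring

/-- `℘'' = 6℘² − g₂/2`, from differentiating the Weierstrass equation and dividing by `2℘'`. -/
lemma lA3_eq {τ : ℂ} (hτ : 0 < τ.im) {z : ℂ} (h : th 0 τ z ≠ 0) (h2 : lA2 τ z ≠ 0) :
    lA3 τ z = -6 * (kap τ - lA1 τ z) ^ 2 + gg2 τ / 2 := by
  have e : (fun w => lA2 τ w ^ 2) =ᶠ[nhds z]
      fun w => 4 * (kap τ - lA1 τ w) ^ 3 - gg2 τ * (kap τ - lA1 τ w) - gg3 τ := by
    filter_upwards [(isOpen_th_ne_z hτ).mem_nhds h] with w hw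
    exact lA2_sq hτ hw
  have d1 := (hasDerivAt_lA2_z hτ h).fun_pow 2
  have dP := (hasDerivAt_lA1_z hτ h).const_sub (kap τ)
  have d2 := ((((dP.fun_pow 3).const_mul 4).sub (dP.const_mul (gg2 τ))).sub_const (gg3 τ))
  have := (d1.congr_of_eventuallyEq e.symm).unique d2
  push_cast at this
  apply mul_left_cancel₀ (mul_ne_zero two_ne_zero h2)
  linear_combination this

lemma eventually_good_z {τ : ℂ} (hτ : 0 < τ.im) {z : ℂ} (h : th 0 τ z ≠ 0) (h2 : lA2 τ z ≠ 0) :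
    ∀ᶠ w in nhds z, th 0 τ w ≠ 0 ∧ lA2 τ w ≠ 0 :=
  ((isOpen_th_ne_z hτ).eventually_mem h).and
    ((hasDerivAt_lA2_z hτ h).continuousAt.eventually_ne h2)

/-- `℘''' = 12℘℘'`. -/
lemma lA4_eq {τ : ℂ} (hτ : 0 < τ.im) {z : ℂ} (h : th 0 τ z ≠ 0) (h2 : lA2 τ z ≠ 0) :
    lA4 τ z = 12 * (kap τ - lA1 τ z) * lA2 τ z := by
  have e : lA3 τ =ᶠ[nhds z] fun w => -6 * (kap τ - lA1 τ w) ^ 2 + gg2 τ / 2 := by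
    filter_upwards [eventually_good_z hτ h h2] with w hw
    exact lA3_eq hτ hw.1 hw.2
  have dP := (hasDerivAt_lA1_z hτ h).const_sub (kap τ)
  have d2 := ((dP.fun_pow 2).const_mul (-6)).add_const (gg2 τ / 2)
  rw [((hasDerivAt_lA3_z hτ h).congr_of_eventuallyEq e.symm).unique d2]
  push_cast; ring

open Filter Topology in
/-- Near every point, `ϑ` and `(log ϑ)'''` are both nonzero off the point itself: the entire function
`ϑ³(log ϑ)'''` takes the value `2ϑ'(0)³ ≠ 0` at the origin. -/
lemma eventually_good {τ : ℂ} (hτ : 0 < τ.im) (z₀ : ℂ) :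
    ∀ᶠ z in 𝓝[≠] z₀, th 0 τ z ≠ 0 ∧ lA2 τ z ≠ 0 := by
  set W : ℂ → ℂ := fun z => th 0 τ z ^ 2 * th 3 τ z - 3 * th 0 τ z * th 1 τ z * th 2 τ z
    + 2 * th 1 τ z ^ 3 with hW
  have d0 := differentiable_th 0 hτ
  have d1 := differentiable_th 1 hτ
  have d2 := differentiable_th 2 hτ
  have d3 := differentiable_th 3 hτ
  have hWd : Differentiable ℂ W := by fun_prop
  have hW0 : W 0 ≠ 0 := by simp [hW, th_zero, th_one_ne_zero hτ]
  have hWne : ∀ᶠ z in 𝓝[≠] z₀, W z ≠ 0 := by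
    rcases (hWd.analyticAt z₀).eventually_eq_zero_or_eventually_ne_zero with h | h
    · exfalso
      have ha : AnalyticOnNhd ℂ W Set.univ := fun z _ => hWd.analyticAt z
      exact hW0 (congrFun (ha.eq_of_eventuallyEq (g := 0) (fun z _ => analyticAt_const) h) 0)
    · exact h
  filter_upwards [eventually_th_ne_zero hτ z₀, hWne] with z h1 h2
  refine ⟨h1, fun h => h2 ?_⟩
  have : W z = th 0 τ z ^ 3 * lA2 τ z := by
    simp only [hW, lA2]; field_simp
  rw [this, h, mul_zero]

open Filter Topology in
/-- `℘` has a pole, so a quadratic polynomial in `℘` vanishes only if its coefficients do. -/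
lemma quad_eq_zero {τ : ℂ} (hτ : 0 < τ.im) {a b c : ℂ}
    (h : ∀ z, th 0 τ z ≠ 0 → lA2 τ z ≠ 0 →
      a * (kap τ - lA1 τ z) ^ 2 + b * (kap τ - lA1 τ z) + c = 0) : a = 0 ∧ b = 0 ∧ c = 0 := by
  have d0 := (differentiable_th 0 hτ).continuous
  have d1 := (differentiable_th 1 hτ).continuous
  have d2 := (differentiable_th 2 hτ).continuous
  set s : ℂ → ℂ := fun z =>
    kap τ * th 0 τ z ^ 2 - (th 0 τ z * th 2 τ z - th 1 τ z ^ 2) with hs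
  have hg := eventually_good hτ 0
  have hsP : ∀ z, th 0 τ z ≠ 0 → s z = th 0 τ z ^ 2 * (kap τ - lA1 τ z) := fun z hz => by
    simp only [hs, lA1]; field_simp
  have hθ1 := th_one_ne_zero hτ
  have lim : ∀ F : ℂ → ℂ, Continuous F → (∀ᶠ z in 𝓝[≠] (0 : ℂ), F z = 0) → F 0 = 0 :=
    fun F hF h0 => tendsto_nhds_unique (hF.tendsto 0 |>.mono_left nhdsWithin_le_nhds)
      (tendsto_const_nhds.congr' (h0.mono fun z hz => hz.symm))
  have ha : a = 0 := by
    have := lim (fun z => a * s z ^ 2 + b * th 0 τ z ^ 2 * s z + c * th 0 τ z ^ 4) (by fun_prop)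
      (hg.mono fun z hz => by
        simp only [hsP z hz.1]
        linear_combination th 0 τ z ^ 4 * h z hz.1 hz.2)
    simpa [hs, th_zero, hθ1] using this
  subst ha
  have hb : b = 0 := by
    have := lim (fun z => b * s z + c * th 0 τ z ^ 2) (by fun_prop)
      (hg.mono fun z hz => by
        simp only [hsP z hz.1]
        linear_combination th 0 τ z ^ 2 * h z hz.1 hz.2)
    simpa [hs, th_zero, hθ1] using this
  subst hb
  obtain ⟨z, hz1, hz2⟩ := hg.exists
  exact ⟨rfl, rfl, by simpa using h z hz1 hz2⟩

lemma eventually_good_tau {τ : ℂ} (hτ : 0 < τ.im) {z : ℂ} (h : th 0 τ z ≠ 0) (h2 : lA2 τ z ≠ 0) :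
    ∀ᶠ t in nhds τ, 0 < t.im ∧ th 0 t z ≠ 0 ∧ lA2 t z ≠ 0 :=
  (isOpen_im_pos.eventually_mem hτ).and
    (((hasDerivAt_th_tau 0 hτ z).continuousAt.eventually_ne h).and
    ((hasDerivAt_lA2_tau hτ h).continuousAt.eventually_ne h2))

/-- `κ` is holomorphic because `℘''' = 12℘℘'` expresses it rationally in the `z`-derivatives of `ϑ`. -/
lemma differentiableAt_kap {τ : ℂ} (hτ : 0 < τ.im) : DifferentiableAt ℂ kap τ := by
  obtain ⟨z, h, h2⟩ := (eventually_good hτ 0).exists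
  have e : kap =ᶠ[nhds τ] fun t => lA1 t z + lA4 t z / (12 * lA2 t z) := by
    filter_upwards [eventually_good_tau hτ h h2] with t ht
    obtain ⟨ht, h1, h2⟩ := ht
    rw [lA4_eq ht h1 h2]; field_simp; ring
  have d1 := (hasDerivAt_lA1_tau hτ h).differentiableAt
  have d2 := (hasDerivAt_lA2_tau hτ h).differentiableAt
  have d4 := differentiableAt_lA4_tau hτ h
  exact (d1.add (d4.div (d2.const_mul 12) (by simpa using h2))).congr_of_eventuallyEq e

/-- Differentiating the Weierstrass equation in `τ`, with the heat equation for `ϑ`, gives a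
polynomial identity in `℘` whose coefficients are the differential equations for `κ`, `g₂`, `g₃`. -/
lemma deriv_system {τ : ℂ} (hτ : 0 < τ.im) :
    deriv kap τ = 1 / (4 * π * I) * (2 * kap τ ^ 2 - gg2 τ / 6) ∧
    deriv gg2 τ = 1 / (4 * π * I) * (8 * kap τ * gg2 τ + 12 * gg3 τ) ∧
    deriv gg3 τ = 1 / (4 * π * I) * (12 * kap τ * gg3 τ + 2 / 3 * gg2 τ ^ 2) := by
  have dκ := (differentiableAt_kap hτ).hasDerivAt
  have dg2 : HasDerivAt gg2 (deriv gg2 τ) τ :=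
    ((differentiableAt_Eis4 hτ).const_mul (4 * π ^ 4 / 3 : ℂ)).hasDerivAt
  have dg3 : HasDerivAt gg3 (deriv gg3 τ) τ :=
    ((differentiableAt_Eis6 hτ).const_mul (8 * π ^ 6 / 27 : ℂ)).hasDerivAt
  set ε : ℂ := 1 / (4 * π * I) with hε
  have key := quad_eq_zero hτ (a := 12 * deriv kap τ - 24 * ε * kap τ ^ 2 + 2 * ε * gg2 τ)
    (b := 8 * ε * kap τ * gg2 τ + 12 * ε * gg3 τ - deriv gg2 τ)
    (c := 12 * ε * kap τ * gg3 τ - gg2 τ * deriv kap τ + 2 * ε * kap τ ^ 2 * gg2 τ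
      + ε * gg2 τ ^ 2 / 2 - deriv gg3 τ) (fun z h h2 => by
    have e : (fun t => lA2 t z ^ 2) =ᶠ[nhds τ]
        fun t => 4 * (kap t - lA1 t z) ^ 3 - gg2 t * (kap t - lA1 t z) - gg3 t := by
      filter_upwards [eventually_good_tau hτ h h2] with t ht
      exact lA2_sq ht.1 ht.2.1
    have dP := dκ.fun_sub (hasDerivAt_lA1_tau hτ h)
    have d1 := (hasDerivAt_lA2_tau hτ h).fun_pow 2
    have d2 := (((dP.fun_pow 3).const_mul 4).fun_sub (dg2.fun_mul dP)).fun_sub dg3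
    have E := (d1.congr_of_eventuallyEq e.symm).unique d2
    push_cast at E
    rw [← hε, lA4_eq hτ h h2, lA3_eq hτ h h2] at E
    have hsq := lA2_sq hτ h
    generalize lA2 τ z = Q at *
    generalize lA0 τ z = A at *
    linear_combination (-1) * E + 12 * ε * (kap τ + (kap τ - lA1 τ z)) * hsq)
  obtain ⟨ha, hb, hc⟩ := key
  have h1 : deriv kap τ = ε * (2 * kap τ ^ 2 - gg2 τ / 6) := by linear_combination ha / 12
  refine ⟨h1, by linear_combination -hb, ?_⟩
  rw [h1] at hc
  linear_combination -hc

/-- The logarithmic derivative of `g₂³ − 27g₃² ∝ η²⁴` identifies `κ`. -/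
lemma kap_eq {τ : ℂ} (hτ : 0 < τ.im) : kap τ = -π ^ 2 / 3 * Eis2 τ := by
  obtain ⟨-, h2, h3⟩ := deriv_system hτ
  have dg2 : HasDerivAt gg2 (deriv gg2 τ) τ :=
    ((differentiableAt_Eis4 hτ).const_mul (4 * π ^ 4 / 3 : ℂ)).hasDerivAt
  have dg3 : HasDerivAt gg3 (deriv gg3 τ) τ :=
    ((differentiableAt_Eis6 hτ).const_mul (8 * π ^ 6 / 27 : ℂ)).hasDerivAt
  have hpi : (π : ℂ) ≠ 0 := by simp [pi_ne_zero]
  have e : (fun t => gg2 t ^ 3 - 27 * gg3 t ^ 2) =ᶠ[nhds τ]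
      fun t => 4096 * π ^ 12 * etaD t ^ 24 := by
    filter_upwards [isOpen_im_pos.mem_nhds hτ] with t ht
    rw [etaD_pow ht, gg2, gg3]; ring
  have d1 := (dg2.fun_pow 3).fun_sub ((dg3.fun_pow 2).const_mul 27)
  have d2 := ((hasDerivAt_etaD hτ).fun_pow 24).const_mul (4096 * π ^ 12 : ℂ)
  have E := (d1.congr_of_eventuallyEq e.symm).unique d2
  have e0 := e.self_of_nhds
  simp only at e0
  rw [h2, h3] at E
  push_cast at E
  have hne : (4096 * π ^ 12 * etaD τ ^ 24 : ℂ) ≠ 0 := by simp [hpi, etaD_ne_zero hτ]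
  have hI : (I : ℂ) ^ 2 = -1 := I_sq
  have E' : 24 * (1 / (4 * π * I)) * kap τ * (4096 * π ^ 12 * etaD τ ^ 24)
      = 2 * π * I * Eis2 τ * (4096 * π ^ 12 * etaD τ ^ 24) := by
    linear_combination E - 24 * (1 / (4 * π * I)) * kap τ * e0
  have E'' := mul_right_cancel₀ hne E'
  field_simp at E''
  linear_combination E'' / 24 + π ^ 2 / 3 * Eis2 τ * hI

/-- Ramanujan's differential equations for `E₂`, `E₄`, `E₆`. -/
lemma ramanujan {τ : ℂ} (hτ : 0 < τ.im) :
    HasDerivAt Eis2 (2 * π * I * ((Eis2 τ ^ 2 - Eis4 τ) / 12)) τ ∧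
    HasDerivAt Eis4 (2 * π * I * ((Eis2 τ * Eis4 τ - Eis6 τ) / 3)) τ ∧
    HasDerivAt Eis6 (2 * π * I * ((Eis2 τ * Eis6 τ - Eis4 τ ^ 2) / 2)) τ := by
  obtain ⟨h1, h2, h3⟩ := deriv_system hτ
  have hpi : (π : ℂ) ≠ 0 := by simp [pi_ne_zero]
  have hI : (I : ℂ) ^ 2 = -1 := I_sq
  have hIi : (1 / (4 * π * I) : ℂ) = -I / (4 * π) := by
    field_simp; linear_combination hI
  rw [kap_eq hτ, hIi] at h1 h2 h3
  have e2 : Eis2 =ᶠ[nhds τ] fun t => -3 / π ^ 2 * kap t := by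
    filter_upwards [isOpen_im_pos.mem_nhds hτ] with t ht
    rw [kap_eq ht]; field_simp
  have d4 := (differentiableAt_Eis4 hτ).hasDerivAt
  have d6 := (differentiableAt_Eis6 hτ).hasDerivAt
  have D4 : deriv gg2 τ = 4 * π ^ 4 / 3 * deriv Eis4 τ := (d4.const_mul (4 * π ^ 4 / 3 : ℂ)).deriv
  have D6 : deriv gg3 τ = 8 * π ^ 6 / 27 * deriv Eis6 τ := (d6.const_mul (8 * π ^ 6 / 27 : ℂ)).deriv
  refine ⟨?_, ?_, ?_⟩
  · have := ((differentiableAt_kap hτ).hasDerivAt.const_mul (-3 / π ^ 2 : ℂ)).congr_of_eventuallyEq e2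
    convert! this using 1
    rw [h1, gg2]; field_simp; ring
  · convert! d4 using 1
    apply mul_left_cancel₀ (show (4 * π ^ 4 / 3 : ℂ) ≠ 0 by simp [hpi])
    rw [← D4, h2, gg2, gg3]; field_simp; ring
  · convert! d6 using 1
    apply mul_left_cancel₀ (show (8 * π ^ 6 / 27 : ℂ) ≠ 0 by simp [hpi])
    rw [← D6, h3, gg2, gg3]; field_simp; ring

/-! ### The heat operator on forms of index two -/

lemma deriv_thetaJ {τ : ℂ} (hτ : 0 < τ.im) : deriv (thetaJ τ) = th 1 τ := by
  have : thetaJ τ = th 0 τ := funext (thetaJ_eq_th τ)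
  rw [this]
  exact funext fun z => (hasDerivAt_th_z 0 hτ z).deriv

lemma phim21_eq (τ z : ℂ) : phim21 τ z = th 0 τ z ^ 2 / etaD τ ^ 6 := by
  rw [phim21, thetaJ_eq_th]

lemma phi01_eq {τ : ℂ} (hτ : 0 < τ.im) (z : ℂ) : phi01 τ z =
    (3 / π ^ 2 * (th 0 τ z * th 2 τ z - th 1 τ z ^ 2) + Eis2 τ * th 0 τ z ^ 2) / etaD τ ^ 6 := by
  rw [phi01, deriv_thetaJ hτ, thetaJ_eq_th, (hasDerivAt_th_z 1 hτ z).deriv]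
  ring

/-- `∂φ₋₂,₁/∂z` in terms of the derivatives of `ϑ`. -/
def Xz (τ z : ℂ) : ℂ := 2 * th 0 τ z * th 1 τ z / etaD τ ^ 6

/-- `∂²φ₋₂,₁/∂z²` in terms of the derivatives of `ϑ`. -/
def Xzz (τ z : ℂ) : ℂ := 2 * (th 1 τ z ^ 2 + th 0 τ z * th 2 τ z) / etaD τ ^ 6

/-- `∂φ₋₂,₁/∂τ`, with the heat equation used to trade `∂ϑ/∂τ` for `∂²ϑ/∂z²`. -/
def Xt (τ z : ℂ) : ℂ :=
  (1 / (4 * π * I) * 2 * th 0 τ z * th 2 τ z - π * I / 2 * Eis2 τ * th 0 τ z ^ 2) / etaD τ ^ 6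

/-- `∂φ₀,₁/∂z` in terms of the derivatives of `ϑ`. -/
def Yz (τ z : ℂ) : ℂ :=
  (3 / π ^ 2 * (th 0 τ z * th 3 τ z - th 1 τ z * th 2 τ z) + Eis2 τ * (2 * th 0 τ z * th 1 τ z))
    / etaD τ ^ 6

/-- `∂²φ₀,₁/∂z²` in terms of the derivatives of `ϑ`. -/
def Yzz (τ z : ℂ) : ℂ :=
  (3 / π ^ 2 * (th 0 τ z * th 4 τ z - th 2 τ z ^ 2)
    + Eis2 τ * (2 * (th 1 τ z ^ 2 + th 0 τ z * th 2 τ z))) / etaD τ ^ 6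

/-- `∂φ₀,₁/∂τ`, by the heat equation for `ϑ` and Ramanujan's equation for `E₂`. -/
def Yt (τ z : ℂ) : ℂ :=
  (3 / π ^ 2 * (1 / (4 * π * I)) * (th 2 τ z ^ 2 + th 0 τ z * th 4 τ z - 2 * th 1 τ z * th 3 τ z)
    + 2 * π * I * ((Eis2 τ ^ 2 - Eis4 τ) / 12) * th 0 τ z ^ 2
    + Eis2 τ * (1 / (4 * π * I)) * 2 * th 0 τ z * th 2 τ z
    - π * I / 2 * Eis2 τ *
      (3 / π ^ 2 * (th 0 τ z * th 2 τ z - th 1 τ z ^ 2) + Eis2 τ * th 0 τ z ^ 2)) / etaD τ ^ 6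

lemma hasDerivAt_X_z {τ : ℂ} (hτ : 0 < τ.im) (z : ℂ) : HasDerivAt (phim21 τ) (Xz τ z) z := by
  have e : phim21 τ = fun z => th 0 τ z ^ 2 / etaD τ ^ 6 := funext (phim21_eq τ)
  rw [e]
  convert! ((hasDerivAt_th_z 0 hτ z).fun_pow 2).div_const (etaD τ ^ 6) using 1
  rw [Xz]; push_cast; ring

lemma hasDerivAt_Xz {τ : ℂ} (hτ : 0 < τ.im) (z : ℂ) : HasDerivAt (Xz τ) (Xzz τ z) z := by
  convert! ((((hasDerivAt_th_z 0 hτ z).const_mul 2).fun_mul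
    (hasDerivAt_th_z 1 hτ z))).div_const (etaD τ ^ 6) using 1
  rw [Xzz]; ring

lemma hasDerivAt_Y_z {τ : ℂ} (hτ : 0 < τ.im) (z : ℂ) : HasDerivAt (phi01 τ) (Yz τ z) z := by
  have e : phi01 τ = _ := funext (phi01_eq hτ)
  rw [e]
  have h0 := hasDerivAt_th_z 0 hτ z
  have h1 := hasDerivAt_th_z 1 hτ z
  have h2 := hasDerivAt_th_z 2 hτ z
  convert! ((((h0.fun_mul h2).fun_sub (h1.fun_pow 2)).const_mul (3 / π ^ 2 : ℂ)).fun_add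
    ((h0.fun_pow 2).const_mul (Eis2 τ))).div_const (etaD τ ^ 6) using 1
  rw [Yz]; push_cast; ring

lemma hasDerivAt_Yz {τ : ℂ} (hτ : 0 < τ.im) (z : ℂ) : HasDerivAt (Yz τ) (Yzz τ z) z := by
  have h0 := hasDerivAt_th_z 0 hτ z
  have h1 := hasDerivAt_th_z 1 hτ z
  have h2 := hasDerivAt_th_z 2 hτ z
  have h3 := hasDerivAt_th_z 3 hτ z
  convert! ((((h0.fun_mul h3).fun_sub (h1.fun_mul h2)).const_mul (3 / π ^ 2 : ℂ)).fun_add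
    (((h0.const_mul 2).fun_mul h1).const_mul (Eis2 τ))).div_const (etaD τ ^ 6) using 1
  rw [Yzz]; ring

lemma hasDerivAt_X_tau {τ : ℂ} (hτ : 0 < τ.im) (z : ℂ) :
    HasDerivAt (fun t => phim21 t z) (Xt τ z) τ := by
  have e : (fun t => phim21 t z) = fun t => th 0 t z ^ 2 / etaD t ^ 6 :=
    funext fun t => phim21_eq t z
  have hη := etaD_ne_zero hτ
  rw [e]
  convert! ((hasDerivAt_th_tau 0 hτ z).fun_pow 2).fun_div ((hasDerivAt_etaD hτ).fun_pow 6)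
    (pow_ne_zero 6 hη) using 1
  rw [Xt]
  generalize (1 / (4 * π * I) : ℂ) = ε
  push_cast; field_simp; ring

lemma hasDerivAt_Y_tau {τ : ℂ} (hτ : 0 < τ.im) (z : ℂ) :
    HasDerivAt (fun t => phi01 t z) (Yt τ z) τ := by
  have e : (fun t => phi01 t z) =ᶠ[nhds τ] fun t =>
      (3 / π ^ 2 * (th 0 t z * th 2 t z - th 1 t z ^ 2) + Eis2 t * th 0 t z ^ 2) / etaD t ^ 6 := by
    filter_upwards [isOpen_im_pos.mem_nhds hτ] with t ht
    exact phi01_eq ht z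
  have hη := etaD_ne_zero hτ
  have h0 := hasDerivAt_th_tau 0 hτ z
  have h1 := hasDerivAt_th_tau 1 hτ z
  have h2 := hasDerivAt_th_tau 2 hτ z
  refine HasDerivAt.congr_of_eventuallyEq ?_ e
  convert! ((((h0.fun_mul h2).fun_sub (h1.fun_pow 2)).const_mul (3 / π ^ 2 : ℂ)).fun_add
    ((ramanujan hτ).1.fun_mul (h0.fun_pow 2))).fun_div ((hasDerivAt_etaD hτ).fun_pow 6)
    (pow_ne_zero 6 hη) using 1
  rw [Yt]
  generalize (1 / (4 * π * I) : ℂ) = ε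
  generalize (3 / π ^ 2 : ℂ) = ρ
  push_cast; field_simp; ring

/-- The index 2 form `aφ₀,₁² + bφ₋₂,₁φ₀,₁ + cφ₋₂,₁²` with coefficients depending on `τ`. -/
def comb (a b c : ℂ → ℂ) (τ z : ℂ) : ℂ :=
  a τ * phi01 τ z ^ 2 + b τ * (phim21 τ z * phi01 τ z) + c τ * phim21 τ z ^ 2

lemma deriv_comb_tau {a b c : ℂ → ℂ} {a' b' c' τ : ℂ} (hτ : 0 < τ.im) (ha : HasDerivAt a a' τ)
    (hb : HasDerivAt b b' τ) (hc : HasDerivAt c c' τ) (z : ℂ) :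
    deriv (fun t => comb a b c t z) τ = a' * phi01 τ z ^ 2 + b' * (phim21 τ z * phi01 τ z)
      + c' * phim21 τ z ^ 2 + a τ * (2 * phi01 τ z * Yt τ z)
      + b τ * (Xt τ z * phi01 τ z + phim21 τ z * Yt τ z) + c τ * (2 * phim21 τ z * Xt τ z) := by
  have hX := hasDerivAt_X_tau hτ z
  have hY := hasDerivAt_Y_tau hτ z
  have := ((ha.fun_mul (hY.fun_pow 2)).fun_add (hb.fun_mul (hX.fun_mul hY))).fun_add
    (hc.fun_mul (hX.fun_pow 2))
  refine this.deriv.trans ?_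
  push_cast; ring

lemma deriv_deriv_comb (a b c : ℂ → ℂ) {τ : ℂ} (hτ : 0 < τ.im) (z : ℂ) :
    deriv (deriv (comb a b c τ)) z = a τ * (2 * Yz τ z ^ 2 + 2 * phi01 τ z * Yzz τ z)
      + b τ * (Xzz τ z * phi01 τ z + 2 * Xz τ z * Yz τ z + phim21 τ z * Yzz τ z)
      + c τ * (2 * Xz τ z ^ 2 + 2 * phim21 τ z * Xzz τ z) := by
  have h1 : deriv (comb a b c τ) = fun z => a τ * (2 * phi01 τ z * Yz τ z)
      + b τ * (Xz τ z * phi01 τ z + phim21 τ z * Yz τ z) + c τ * (2 * phim21 τ z * Xz τ z) := by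
    funext z
    have hX := hasDerivAt_X_z hτ z
    have hY := hasDerivAt_Y_z hτ z
    refine ((((hY.fun_pow 2).const_mul (a τ)).fun_add ((hX.fun_mul hY).const_mul (b τ))).fun_add
      ((hX.fun_pow 2).const_mul (c τ))).deriv.trans ?_
    push_cast; ring
  rw [h1]
  have hX := hasDerivAt_X_z hτ z
  have hY := hasDerivAt_Y_z hτ z
  have hX' := hasDerivAt_Xz hτ z
  have hY' := hasDerivAt_Yz hτ z
  refine (((((hY.const_mul 2).fun_mul hY').const_mul (a τ)).fun_add
    (((hX'.fun_mul hY).fun_add (hX.fun_mul hY')).const_mul (b τ))).fun_add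
    (((hX.const_mul 2).fun_mul hX').const_mul (c τ))).deriv.trans ?_
  ring

/-- The heat operator preserves the span of `φ₀,₁²`, `φ₋₂,₁φ₀,₁`, `φ₋₂,₁²` over the functions of `τ`:
the quotient `φ₀,₁/φ₋₂,₁` is a multiple of `℘`, and the Weierstrass equation eliminates `℘'²` and
`℘''`. The identity is checked where `ϑ` and `℘'` do not vanish and extended by continuity. -/
lemma heatMod_comb {a b c : ℂ → ℂ} {a' b' c' τ : ℂ} (k : ℚ) (hτ : 0 < τ.im)
    (ha : HasDerivAt a (2 * π * I / 12 * a') τ) (hb : HasDerivAt b (2 * π * I / 12 * b') τ)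
    (hc : HasDerivAt c (2 * π * I / 12 * c') τ) (z : ℂ) :
    heatMod 2 k (comb a b c) τ z =
      (a' - k * Eis2 τ * a τ - b τ / 4) * phi01 τ z ^ 2
      + (b' - (k + 2) * Eis2 τ * b τ - 7 / 2 * Eis4 τ * a τ - 3 / 2 * c τ)
        * (phim21 τ z * phi01 τ z)
      + (c' - (k + 4) * Eis2 τ * c τ - 13 / 4 * Eis4 τ * b τ - 2 * Eis6 τ * a τ)
        * phim21 τ z ^ 2 := by
  have hpi : (π : ℂ) ≠ 0 := by simp [pi_ne_zero]
  have hη := etaD_ne_zero hτ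
  have cX : Continuous (phim21 τ) :=
    continuous_iff_continuousAt.2 fun z => (hasDerivAt_X_z hτ z).continuousAt
  have cY : Continuous (phi01 τ) :=
    continuous_iff_continuousAt.2 fun z => (hasDerivAt_Y_z hτ z).continuousAt
  have c0 := (differentiable_th 0 hτ).continuous
  have c1 := (differentiable_th 1 hτ).continuous
  have c2 := (differentiable_th 2 hτ).continuous
  have c3 := (differentiable_th 3 hτ).continuous
  have c4 := (differentiable_th 4 hτ).continuous
  have hform : ∀ z, heatMod 2 k (comb a b c) τ z = _ := fun z => by
    rw [heatMod, heatOp, deriv_comb_tau hτ ha hb hc, deriv_deriv_comb a b c hτ]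
  have hclosed : IsClosed {z | heatMod 2 k (comb a b c) τ z =
      (a' - k * Eis2 τ * a τ - b τ / 4) * phi01 τ z ^ 2
      + (b' - (k + 2) * Eis2 τ * b τ - 7 / 2 * Eis4 τ * a τ - 3 / 2 * c τ)
        * (phim21 τ z * phi01 τ z)
      + (c' - (k + 4) * Eis2 τ * c τ - 13 / 4 * Eis4 τ * b τ - 2 * Eis6 τ * a τ)
        * phim21 τ z ^ 2} := by
    refine isClosed_eq ?_ (by fun_prop)
    rw [funext hform]
    unfold Xt Yt Xz Yz Xzz Yzz comb
    fun_prop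
  refine closure_minimal (s := {z | th 0 τ z ≠ 0 ∧ lA2 τ z ≠ 0}) ?_ hclosed ?_
  · rintro z ⟨h, h2⟩
    have hI : (I : ℂ) ^ 2 = -1 := I_sq
    have hIi : (1 / (4 * π * I) : ℂ) = -I / (4 * π) := by
      field_simp; linear_combination hI
    have hIj : (12 / (2 * π * I) : ℂ) = -6 * I / π := by
      field_simp; linear_combination 12 * hI
    have h3 := lA3_eq hτ h h2
    have hsq := lA2_sq hτ h
    rw [kap_eq hτ, gg2] at h3 hsq
    rw [gg3] at hsq
    have eY : phi01 τ z = phim21 τ z * (3 / π ^ 2 * lA1 τ z + Eis2 τ) := by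
      rw [phi01_eq hτ, phim21_eq, lA1]; field_simp
    have eXz : Xz τ z = phim21 τ z * (2 * lA0 τ z) := by
      rw [Xz, phim21_eq, lA0]; field_simp
    have eXzz : Xzz τ z = phim21 τ z * (4 * lA0 τ z ^ 2 + 2 * lA1 τ z) := by
      rw [Xzz, phim21_eq, lA0, lA1]; field_simp; ring
    have eXt : Xt τ z = phim21 τ z *
        (-I / (2 * π) * (lA0 τ z ^ 2 + lA1 τ z) - π * I / 2 * Eis2 τ) := by
      rw [Xt, hIi, phim21_eq, lA0, lA1]; field_simp; ring
    have eYz : Yz τ z = phim21 τ z * (2 * lA0 τ z * (3 / π ^ 2 * lA1 τ z + Eis2 τ)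
        + 3 / π ^ 2 * lA2 τ z) := by
      rw [Yz, phim21_eq, lA0, lA1, lA2]; field_simp; ring
    have eYzz : Yzz τ z = phim21 τ z * ((4 * lA0 τ z ^ 2 + 2 * lA1 τ z)
        * (3 / π ^ 2 * lA1 τ z + Eis2 τ)
        + 4 * lA0 τ z * (3 / π ^ 2 * lA2 τ z) + 3 / π ^ 2 * lA3 τ z) := by
      rw [Yzz, phim21_eq, lA0, lA1, lA2, lA3]; field_simp; ring
    have eYt : Yt τ z = phim21 τ z *
        ((-I / (2 * π) * (lA0 τ z ^ 2 + lA1 τ z) - π * I / 2 * Eis2 τ)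
          * (3 / π ^ 2 * lA1 τ z + Eis2 τ)
        + 3 / π ^ 2 * (-I / (4 * π)) * (2 * lA1 τ z ^ 2 + 2 * lA0 τ z * lA2 τ z + lA3 τ z)
        + 2 * π * I * ((Eis2 τ ^ 2 - Eis4 τ) / 12)) := by
      rw [Yt, hIi, phim21_eq, lA0, lA1, lA2, lA3]; field_simp; ring
    show heatMod 2 k (comb a b c) τ z = _
    rw [hform, comb, hIj, eY, eXz, eXzz, eXt, eYz, eYzz, eYt, h3]
    generalize phim21 τ z = X
    generalize lA2 τ z = Q at hsq
    generalize lA1 τ z = P at hsq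
    generalize lA0 τ z = A
    push_cast
    -- `27/(4π⁶)·aX²` is the coefficient of `(log ϑ)'''²`, coming from the term `aφ₀,₁²`.
    linear_combination (norm := skip) 27 / (4 * π ^ 6) * a τ * X ^ 2 * hsq
    field_simp
    ring_nf
    simp only [I_sq]
    ring
  · rw [mem_closure_iff_frequently]
    exact ((eventually_good hτ z).frequently).filter_mono nhdsWithin_le_nhds

/-! ### The modular differential equation -/

/-- The heat operator at a point of the upper half-plane only depends on the function there. -/
lemma heatMod_congr {φ χ : ℂ → ℂ → ℂ} (m k : ℚ) (h : ∀ t z, 0 < t.im → φ t z = χ t z) {τ : ℂ}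
    (hτ : 0 < τ.im) (z : ℂ) : heatMod m k φ τ z = heatMod m k χ τ z := by
  have h1 : (fun t => φ t z) =ᶠ[nhds τ] fun t => χ t z := by
    filter_upwards [isOpen_im_pos.mem_nhds hτ] with t ht
    exact h t z ht
  have h2 : φ τ = χ τ := funext fun z => h τ z hτ
  rw [heatMod, heatMod, heatOp, heatOp, h1.deriv_eq, h2]

lemma psi02_eq (τ z : ℂ) :
    psi02 τ z = comb (fun _ => 1 / 6) (fun _ => 0) (fun t => 5 / 6 * Eis4 t) τ z := by
  simp only [psi02, phi02, comb]; ring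

lemma heat_psi02 {τ : ℂ} (hτ : 0 < τ.im) (z : ℂ) : heatMod 2 0 psi02 τ z =
    comb (fun _ => 0) (fun t => -11 / 6 * Eis4 t) (fun t => -11 / 3 * Eis6 t) τ z := by
  obtain ⟨-, r4, -⟩ := ramanujan hτ
  rw [heatMod_congr 2 0 (fun t z _ => psi02_eq t z) hτ,
    heatMod_comb (a' := 0) (b' := 0) (c' := 10 / 3 * (Eis2 τ * Eis4 τ - Eis6 τ)) 0 hτ
      (by simpa using hasDerivAt_const τ (1 / 6 : ℂ)) (by simpa using hasDerivAt_const τ (0 : ℂ))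
      (by convert! r4.const_mul (5 / 6 : ℂ) using 1; ring) z, comb]
  push_cast; ring

lemma heat_heat_psi02 {τ : ℂ} (hτ : 0 < τ.im) (z : ℂ) :
    heatMod 2 2 (heatMod 2 0 psi02) τ z =
    comb (fun t => 11 / 24 * Eis4 t) (fun t => 77 / 6 * Eis6 t)
      (fun t => 671 / 24 * Eis4 t ^ 2) τ z := by
  obtain ⟨-, r4, r6⟩ := ramanujan hτ
  rw [heatMod_congr 2 2 (fun t z ht => heat_psi02 ht z) hτ,
    heatMod_comb (a' := 0) (b' := -22 / 3 * (Eis2 τ * Eis4 τ - Eis6 τ))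
      (c' := -22 * (Eis2 τ * Eis6 τ - Eis4 τ ^ 2)) 2 hτ
      (by simpa using hasDerivAt_const τ (0 : ℂ))
      (by convert! r4.const_mul (-11 / 6 : ℂ) using 1; ring)
      (by convert! r6.const_mul (-11 / 3 : ℂ) using 1; ring) z, comb]
  push_cast; ring

/-- degree-3 modular differential equation for `ψ_{0,2}`:
`H^{(2)}_{4}H^{(2)}_{2}H^{(2)}_{0}(ψ_{0,2}) − (263/4)·E₄·H^{(2)}_{0}(ψ_{0,2}) + (121/4)·E₆·ψ_{0,2} = 0`. -/
theorem statement15 (τ z : ℂ) (hτ : 0 < τ.im) :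
    heatMod 2 4 (heatMod 2 2 (heatMod 2 0 psi02)) τ z
      - (263/4) * Eis4 τ * heatMod 2 0 psi02 τ z
      + (121/4) * Eis6 τ * psi02 τ z = 0 := by
  obtain ⟨-, r4, r6⟩ := ramanujan hτ
  rw [heatMod_congr 2 4 (fun t z ht => heat_heat_psi02 ht z) hτ,
    heatMod_comb (a' := 11 / 6 * (Eis2 τ * Eis4 τ - Eis6 τ))
      (b' := 77 * (Eis2 τ * Eis6 τ - Eis4 τ ^ 2))
      (c' := 671 / 3 * Eis4 τ * (Eis2 τ * Eis4 τ - Eis6 τ)) 4 hτ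
      (by convert! r4.const_mul (11 / 24 : ℂ) using 1; ring)
      (by convert! r6.const_mul (77 / 6 : ℂ) using 1; ring)
      (by convert! (r4.fun_pow 2).const_mul (671 / 24 : ℂ) using 1; push_cast; ring) z,
    heat_psi02 hτ, psi02_eq, comb, comb]
  push_cast; ring
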